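/- Let 2 ≤ n ≤ 4 and let k ≥ 1 be an integer. Assume f satisfies (f1), (f2), and (f4'): (F/f)'(s) ≥ (n−2)/2 for all s > β. Then the problem u''(r) + ((n−1)/r)u'(r) + f(u(r)) = 0 on (0,∞), u'(0) = 0, lim_{r→∞} u(r) = 0, has at most one solution u with u(0) > 0 having exactly k−1 sign changes in (0,∞); i.e., if u₁ and u₂ are two such solutions, then u₁(0) = u₂(0) and u₁ ≡ u₂. -/

import Mathlib

open Set Filter MeasureTheory

namespace Paper

noncomputable section

/-- `F s = ∫₀ˢ f t dt`. -/
def Fint (f : ℝ → ℝ) (s : ℝ) : ℝ := ∫ t in (0:ℝ)..s, f t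

/-- Hypothesis (f1): `f` is odd, `f 0 = 0`, there are `β > b > 0` with `f > 0` on `(b,∞)`,
`f ≤ 0`, `f ≢ 0` on `[0,b]`, and `F β = 0`. -/
def Hf1 (f : ℝ → ℝ) (b β : ℝ) : Prop :=
  (∀ s, f (-s) = -f s) ∧ f 0 = 0 ∧ 0 < b ∧ b < β ∧
    (∀ s, b < s → 0 < f s) ∧ (∀ s ∈ Icc (0:ℝ) b, f s ≤ 0) ∧
    (∃ s ∈ Icc (0:ℝ) b, f s ≠ 0) ∧ Fint f β = 0

/-- Hypothesis (f2): `f` continuous on `[0,∞)`, C¹ on `(0,∞)`, `f' ∈ L¹(0,1)`. -/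
def Hf2 (f : ℝ → ℝ) : Prop :=
  ContinuousOn f (Ici 0) ∧ (∀ s : ℝ, 0 < s → DifferentiableAt ℝ f s) ∧
    ContinuousOn (deriv f) (Ioi 0) ∧ IntegrableOn (deriv f) (Ioo 0 1)

/-- Hypothesis (f3): `f s ≥ f' s * (s - β)` for `s ≥ β`. -/
def Hf3 (f : ℝ → ℝ) (β : ℝ) : Prop := ∀ s, β ≤ s → deriv f s * (s - β) ≤ f s

/-- Hypothesis (f4): `(F/f)' s ≥ (n-2)/(2n)` for `s > β`. -/
def Hf4 (n : ℕ) (f : ℝ → ℝ) (β : ℝ) : Prop :=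
  ∀ s, β < s → ((n : ℝ) - 2) / (2 * (n : ℝ)) ≤ deriv (fun t => Fint f t / f t) s

/-- Hypothesis (f4'): `(F/f)' s ≥ (n-2)/2` for `s > β`. -/
def Hf4' (n : ℕ) (f : ℝ → ℝ) (β : ℝ) : Prop :=
  ∀ s, β < s → ((n : ℝ) - 2) / 2 ≤ deriv (fun t => Fint f t / f t) s

/-- Hypothesis (f5): `s ↦ s f' s / f s` is nonincreasing on `[β,∞)`. -/
def Hf5 (f : ℝ → ℝ) (β : ℝ) : Prop := AntitoneOn (fun s => s * deriv f s / f s) (Ici β)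

/-- Hypothesis (f6): `β f' β / f β ≤ n/(n-2)`. -/
def Hf6 (n : ℕ) (f : ℝ → ℝ) (β : ℝ) : Prop := β * deriv f β / f β ≤ (n : ℝ) / ((n : ℝ) - 2)

/-- Hypothesis (f1'): `f 0 = 0` and `s f s > 0` for `s > 0`. -/
def Hf1' (f : ℝ → ℝ) : Prop := f 0 = 0 ∧ ∀ s : ℝ, 0 < s → 0 < s * f s

/-- Hypothesis (f3'): `f s ≥ s f' s` for `s > 0`, with strict inequality at points
arbitrarily close to `0`. -/
def Hf3' (f : ℝ → ℝ) : Prop :=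
  (∀ s : ℝ, 0 < s → s * deriv f s ≤ f s) ∧
    ∀ ε : ℝ, 0 < ε → ∃ s ∈ Ioo (0:ℝ) ε, s * deriv f s < f s

/-- `v` is a C² solution of (E) on `(0,∞)`, continuous on `[0,∞)`,
with `v 0 = α` and `v' 0 = 0`. -/
def IVPsol (n : ℕ) (f : ℝ → ℝ) (α : ℝ) (v : ℝ → ℝ) : Prop :=
  v 0 = α ∧ deriv v 0 = 0 ∧ ContinuousOn v (Ici 0) ∧
    (∀ r : ℝ, 0 < r → DifferentiableAt ℝ v r ∧ DifferentiableAt ℝ (deriv v) r) ∧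
    (∀ r : ℝ, 0 < r → deriv (deriv v) r + ((n : ℝ) - 1) / r * deriv v r + f (v r) = 0)

/-- The family `α ↦ u α` of solutions of the IVP, with `u α r` and `u' α r`
continuous in `(α, r)`. -/
def Family (n : ℕ) (f : ℝ → ℝ) (u : ℝ → ℝ → ℝ) : Prop :=
  (∀ α : ℝ, 0 < α → IVPsol n f α (u α)) ∧
    ContinuousOn (fun p : ℝ × ℝ => u p.1 p.2) (Ioi 0 ×ˢ Ici 0) ∧
    ContinuousOn (fun p : ℝ × ℝ => deriv (u p.1) p.2) (Ioi 0 ×ˢ Ici 0)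

/-- The set whose supremum is `Z_k α`, given `T = T_{k-1} α`. -/
def ZsetAux (u : ℝ → ℝ → ℝ) (k : ℕ) (T α : ℝ) : Set ℝ :=
  {r | T < r ∧ ∀ s ∈ Ioo T r, (-1 : ℝ) ^ k * u α s < 0 ∧ 0 < (-1 : ℝ) ^ k * deriv (u α) s}

/-- The pair `(Z_k, T_k)`, with `T₀ = 0`;
`Z_k α = sup {r > T_{k-1} α | (-1)^k u < 0, (-1)^k u' > 0 on (T_{k-1} α, r)}` and
`T_k α = inf {r > Z_k α | u'(r, α) = 0}`. -/
def ZT (u : ℝ → ℝ → ℝ) : ℕ → (ℝ → ℝ) × (ℝ → ℝ)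
  | 0 => (fun _ => 0, fun _ => 0)
  | k + 1 =>
    let Z : ℝ → ℝ := fun α => sSup (ZsetAux u (k + 1) ((ZT u k).2 α) α)
    (Z, fun α => sInf {r | Z α < r ∧ deriv (u α) r = 0})

/-- `Z_k α` (as a real number; the genuine value when the defining set is bounded above). -/
def Zk (u : ℝ → ℝ → ℝ) (k : ℕ) (α : ℝ) : ℝ := (ZT u k).1 α

/-- `T_k α`, with `T₀ = 0`. -/
def Tk (u : ℝ → ℝ → ℝ) (k : ℕ) (α : ℝ) : ℝ := (ZT u k).2 α

/-- The defining set of `Z_k α`; `Z_k α = ∞` iff this set is unbounded above. -/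
def ZsetK (u : ℝ → ℝ → ℝ) (k : ℕ) (α : ℝ) : Set ℝ := ZsetAux u k (Tk u (k - 1) α) α

open Classical in
/-- The value of `u (·, α)` at `Z_k α`, as a limit `r → ∞` when `Z_k α = ∞`. -/
def uAtZ (u : ℝ → ℝ → ℝ) (k : ℕ) (α : ℝ) : ℝ :=
  if BddAbove (ZsetK u k α) then u α (Zk u k α) else limUnder atTop (u α)

open Classical in
/-- The value of `u' (·, α)` at `Z_k α`, as a limit `r → ∞` when `Z_k α = ∞`. -/
def duAtZ (u : ℝ → ℝ → ℝ) (k : ℕ) (α : ℝ) : ℝ :=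
  if BddAbove (ZsetK u k α) then deriv (u α) (Zk u k α) else limUnder atTop (deriv (u α))

open Classical in
/-- `Z_k α` as an extended real number. -/
def ZkE (u : ℝ → ℝ → ℝ) (k : ℕ) (α : ℝ) : WithTop ℝ :=
  if BddAbove (ZsetK u k α) then (Zk u k α : WithTop ℝ) else ⊤

/-- Membership in `F̃_k` (for `α ∈ N_{k-1}`): `(-1)^k u' (r, α) < 0` for all `r > Z_{k-1} α`. -/
def Ftil (u : ℝ → ℝ → ℝ) (k : ℕ) (α : ℝ) : Prop :=
  ∀ r, Zk u (k - 1) α < r → (-1 : ℝ) ^ k * deriv (u α) r < 0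

/-- The sets `N_k` (with `N₀ := (0,∞)`). -/
def Nk (u : ℝ → ℝ → ℝ) : ℕ → Set ℝ
  | 0 => Ioi 0
  | 1 => {α | 0 < α ∧ uAtZ u 1 α = 0 ∧ duAtZ u 1 α < 0}
  | k + 2 => {α | α ∈ Nk u (k + 1) ∧ ¬Ftil u (k + 2) α ∧ uAtZ u (k + 2) α = 0 ∧
      0 < (-1 : ℝ) ^ (k + 2) * duAtZ u (k + 2) α}

/-- The sets `G_k`. -/
def Gk (u : ℝ → ℝ → ℝ) : ℕ → Set ℝ
  | 0 => ∅
  | 1 => {α | 0 < α ∧ uAtZ u 1 α = 0 ∧ duAtZ u 1 α = 0}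
  | k + 2 => {α | α ∈ Nk u (k + 1) ∧ ¬Ftil u (k + 2) α ∧ uAtZ u (k + 2) α = 0 ∧
      duAtZ u (k + 2) α = 0}

/-- The set `F̃_k` (for `k ≥ 2`). -/
def FtilSet (u : ℝ → ℝ → ℝ) (k : ℕ) : Set ℝ := {α | α ∈ Nk u (k - 1) ∧ Ftil u k α}

/-- The set `F_k` (for `k ≥ 2`). -/
def Fk (u : ℝ → ℝ → ℝ) (k : ℕ) : Set ℝ :=
  {α | α ∈ Nk u (k - 1) ∧ ¬Ftil u k α ∧ (-1 : ℝ) ^ k * uAtZ u k α < 0}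

/-- The sets `P_k`. -/
def Pk (u : ℝ → ℝ → ℝ) : ℕ → Set ℝ
  | 0 => ∅
  | 1 => {α | 0 < α ∧ 0 < uAtZ u 1 α}
  | k + 2 => FtilSet u (k + 2) ∪ Fk u (k + 2)

/-- The set of extremal points (zeros of `u' (·, α)`) in `[0, A]`. -/
def ExtSet (u : ℝ → ℝ → ℝ) (α A : ℝ) : Set ℝ := {r | r ∈ Icc 0 A ∧ deriv (u α) r = 0}

/-- The conclusion of the δ₁-lemma (Lemma 4.1): every solution with initial value in
`(α*-δ₁, α*+δ₁)` has exactly `k` extremal points in `[0, T_{k-1}(α*) + a]`, with minimum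
values `< -β` and maximum values `> β`; moreover any two such solutions intersect between
any two of their consecutive extremal points, and in `(T_{k-1}(α*), Z_k(α*))`. -/
def DeltaOneLemma (f : ℝ → ℝ) (β : ℝ) (u : ℝ → ℝ → ℝ) (k : ℕ) (αs a δ₁ : ℝ) : Prop :=
  0 < a ∧ 0 < δ₁ ∧
    (∀ α ∈ Ioo (αs - δ₁) (αs + δ₁),
      (ExtSet u α (Tk u (k - 1) αs + a)).Finite ∧
        (ExtSet u α (Tk u (k - 1) αs + a)).ncard = k ∧
        ∀ r ∈ ExtSet u α (Tk u (k - 1) αs + a),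
          (IsLocalMin (u α) r → u α r < -β) ∧ (IsLocalMax (u α) r → β < u α r)) ∧
    ∀ α₁ ∈ Ioo (αs - δ₁) (αs + δ₁), ∀ α₂ ∈ Ioo (αs - δ₁) (αs + δ₁), α₁ < α₂ →
      (∀ i : ℕ, 1 ≤ i → i ≤ k - 1 →
        ∃ t, max (Tk u (i - 1) α₁) (Tk u (i - 1) α₂) < t ∧
          t < min (Tk u i α₁) (Tk u i α₂) ∧ u α₁ t = u α₂ t) ∧
      ∃ t, Tk u (k - 1) αs < t ∧ (BddAbove (ZsetK u k αs) → t < Zk u k αs) ∧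
        u α₁ t = u α₂ t

/-- `ρ` is the inverse of the monotone branch of `v` on `[t₁, t₂]`, whose set of values
is `[m, M]`. -/
def InvBranch (v ρ : ℝ → ℝ) (t₁ t₂ m M : ℝ) : Prop :=
  (∀ s ∈ Icc m M, ρ s ∈ Icc t₁ t₂ ∧ v (ρ s) = s) ∧
    ∀ s ∈ Ioo m M, HasDerivAt ρ (1 / deriv v (ρ s)) s

/-- `ρ` inverts a decreasing branch of `v` over the value interval `[m, M]`, along which
`(v')² + 2F > 0`. -/
def DecBranchInv (f : ℝ → ℝ) (v ρ : ℝ → ℝ) (m M : ℝ) : Prop :=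
  ∀ s ∈ Icc m M, 0 ≤ ρ s ∧ v (ρ s) = s ∧ deriv v (ρ s) < 0 ∧
    HasDerivAt ρ (1 / deriv v (ρ s)) s ∧ 0 < (deriv v (ρ s)) ^ 2 + 2 * Fint f s

/-- The functional `Q(s) = -4 (F/f)(s) r/r' - r²/(r')² - 2 r² F(s) + H(s)` computed along
the branch inverse `ρ`. -/
def Qfun (f H ρ : ℝ → ℝ) (s : ℝ) : ℝ :=
  -4 * (Fint f s / f s) * (ρ s / deriv ρ s) - (ρ s) ^ 2 / (deriv ρ s) ^ 2 -
    2 * (ρ s) ^ 2 * Fint f s + H s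

/-- The functional `P(s) = -2n (F/f)(s) r^{n-1}/r' - r^n/(r')² - 2 r^n F(s)`. -/
def Pfun (n : ℕ) (f : ℝ → ℝ) (ρ : ℝ → ℝ) (s : ℝ) : ℝ :=
  -(2 * (n : ℝ)) * (Fint f s / f s) * (ρ s ^ (n - 1) / deriv ρ s) -
    ρ s ^ n / (deriv ρ s) ^ 2 - 2 * ρ s ^ n * Fint f s

/-- The functional `W(s) = r(s) √((u'(r(s)))² + 2 F(s))`. -/
def Wfun (f v ρ : ℝ → ℝ) (s : ℝ) : ℝ :=
  ρ s * Real.sqrt ((deriv v (ρ s)) ^ 2 + 2 * Fint f s)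

/-- The functional `W̃(s) = r(s)^{n-1} √((u'(r(s)))² + 2 F(s))`. -/
def Wtil (n : ℕ) (f : ℝ → ℝ) (v ρ : ℝ → ℝ) (s : ℝ) : ℝ :=
  ρ s ^ (n - 1) * Real.sqrt ((deriv v (ρ s)) ^ 2 + 2 * Fint f s)

/-- `v` changes sign at `z ∈ (0,∞)`: `v z = 0` and `v` takes both signs in every
neighborhood of `z` (within `(0,∞)`). -/
def SignChange (v : ℝ → ℝ) (z : ℝ) : Prop :=
  v z = 0 ∧ ∀ ε : ℝ, 0 < ε →
    (∃ x ∈ Ioo (z - ε) (z + ε) ∩ Ioi 0, 0 < v x) ∧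
    (∃ x ∈ Ioo (z - ε) (z + ε) ∩ Ioi 0, v x < 0)

/-- `v` has exactly `m` sign changes in `(0,∞)`. -/
def ExactSignChanges (v : ℝ → ℝ) (m : ℕ) : Prop :=
  {z | 0 < z ∧ SignChange v z}.Finite ∧ {z | 0 < z ∧ SignChange v z}.ncard = m

/-- Bound state: a C² solution of (E) on `(0,∞)` with `v' 0 = 0` and `v r → 0` as `r → ∞`. -/
def BoundState (n : ℕ) (f : ℝ → ℝ) (v : ℝ → ℝ) : Prop :=
  ContinuousOn v (Ici 0) ∧
    (∀ r : ℝ, 0 < r → DifferentiableAt ℝ v r ∧ DifferentiableAt ℝ (deriv v) r) ∧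
    (∀ r : ℝ, 0 < r → deriv (deriv v) r + ((n : ℝ) - 1) / r * deriv v r + f (v r) = 0) ∧
    deriv v 0 = 0 ∧ Tendsto v atTop (nhds 0)

/-- Solution of the Dirichlet problem on the ball of radius `R`. -/
def DirichletSol (n : ℕ) (f : ℝ → ℝ) (R : ℝ) (v : ℝ → ℝ) : Prop :=
  ContinuousOn v (Icc 0 R) ∧
    (∀ r ∈ Ioo (0:ℝ) R, DifferentiableAt ℝ v r ∧ DifferentiableAt ℝ (deriv v) r) ∧
    (∀ r ∈ Ioo (0:ℝ) R, deriv (deriv v) r + ((n : ℝ) - 1) / r * deriv v r + f (v r) = 0) ∧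
    deriv v 0 = 0 ∧ v R = 0

end
end Paper

open Paper Set Filter MeasureTheory

/-! Between two critical points a solution is inverted: the radius `r` and the slope `p = |u'|`
become functions of the value `s` of the solution. The functional `r² (p² + 2 F(s)) - 4 (F/f)(s) r p
+ K(s)` with `K' = 4 (n - 2) F / f` has derivative `-4 ((F/f)' - (n - 2)/2) r p`, so (f4') makes it
antitone in `s` for `|s| > β`, and makes the difference of its values along two solutions antitone
while `r p` is larger along the second one. Together with the same property of `r √(p² + 2 F(s))` on
`[-β, β]`, where `F ≤ 0`, this shows that the solution starting higher keeps the larger `r p` and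
`p` down to the next critical point, reaches a lower value there, and has the larger functional
there. Up to a sign this is the situation at the start, so the comparison continues by induction on
the number of sign changes. On the last monotone piece it bounds `r p` away from zero, although `r
p` is not bounded away from zero along a decaying solution; hence the initial values agree.

The initial value problem is uniquely solvable although `f` need not be Lipschitz: where `u' ≠ 0`
the inverse function solves a Lipschitz system, and where `u' = 0` the energy `u'² + 2 F(u)` either
is not positive, and then `u` vanishes from there on, or forces `|u| > β`, where `f` is `C¹`. -/

namespace RadialODE

open Topology

variable {d β a M T a₁ a₂ M₁ M₂ T₁ T₂ : ℝ} {f r p r₁ p₁ r₂ p₂ : ℝ → ℝ}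

/-! ### One-sided sign arguments -/

theorem exists_last_zero {g : ℝ → ℝ} {a c : ℝ} (hac : a ≤ c) (hg : ContinuousOn g (Icc a c))
    (ha : g a ≤ 0) (hc : 0 < g c) : ∃ s ∈ Ico a c, g s = 0 ∧ ∀ t ∈ Ioc s c, 0 < g t := by
  have hcompact : IsCompact (Icc a c ∩ g ⁻¹' Iic 0) := isCompact_Icc.of_isClosed_subset
    (hg.preimage_isClosed_of_isClosed isClosed_Icc isClosed_Iic) inter_subset_left
  obtain ⟨s, ⟨hs, hgs⟩, hmax⟩ := hcompact.exists_isGreatest ⟨a, left_mem_Icc.2 hac, ha⟩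
  have hpos : ∀ t ∈ Ioc s c, 0 < g t := fun t ht => by
    by_contra hgt
    exact ht.1.not_ge (hmax ⟨⟨hs.1.trans ht.1.le, ht.2⟩, not_lt.1 hgt⟩)
  obtain ⟨z, hz, hgz⟩ := intermediate_value_Icc hs.2
    (hg.mono (Icc_subset_Icc_left hs.1)) (show (0 : ℝ) ∈ Icc (g s) (g c) from ⟨hgs, hc.le⟩)
  obtain rfl : z = s := by
    by_contra hne
    exact (hpos z ⟨lt_of_le_of_ne hz.1 (Ne.symm hne), hz.2⟩).ne' hgz
  exact ⟨z, ⟨hs.1, lt_of_le_of_ne hs.2 fun h => hc.ne' (h ▸ hgz)⟩, hgz, hpos⟩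

theorem exists_last_zero_of_eventually_pos {g : ℝ → ℝ} {a c : ℝ} (hac : a < c)
    (hg : ContinuousOn g (Ico a c)) (ha : g a ≤ 0) (hc : ∀ᶠ t in 𝓝[<] c, 0 < g t) :
    ∃ s ∈ Ico a c, g s = 0 ∧ ∀ t ∈ Ioo s c, 0 < g t := by
  obtain ⟨l, hlc, hl⟩ := (mem_nhdsLT_iff_exists_Ioo_subset' hac).1 hc
  obtain ⟨m, hm, hmc⟩ := exists_between (max_lt hac hlc)
  obtain ⟨ham, hlm⟩ := max_lt_iff.1 hm
  obtain ⟨s, hs, hgs, hpos⟩ := exists_last_zero ham.le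
    (hg.mono fun t ht => ⟨ht.1, ht.2.trans_lt hmc⟩) ha (hl ⟨hlm, hmc⟩)
  refine ⟨s, ⟨hs.1, hs.2.trans hmc⟩, hgs, fun t ht => ?_⟩
  rcases le_total t m with h | h
  · exact hpos t ⟨ht.1, h⟩
  · exact hl ⟨hlm.trans_le h, ht.2⟩

theorem deriv_nonneg_of_pos_right {g : ℝ → ℝ} {g' s c : ℝ} (hsc : s < c)
    (hg : HasDerivAt g g' s) (h0 : g s = 0) (hpos : ∀ t ∈ Ioo s c, 0 < g t) : 0 ≤ g' := by
  have hslope : Tendsto (slope g s) (𝓝[>] s) (𝓝 g') :=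
    (hasDerivAt_iff_tendsto_slope.1 hg).mono_left (nhdsWithin_mono _ fun x hx => ne_of_gt hx)
  refine ge_of_tendsto hslope ?_
  filter_upwards [Ioo_mem_nhdsGT hsc] with t ht
  rw [slope_def_field, h0, sub_zero]
  exact div_nonneg (hpos t ht).le (sub_nonneg.2 ht.1.le)

theorem lt_abs_of_mem_interior {D : Set ℝ} (hβ : β ≠ 0) (hD : ∀ u ∈ D, β ≤ |u|) {u : ℝ}
    (hu : u ∈ interior D) : β < |u| := by
  have hsub : D ⊆ (Metric.ball 0 β)ᶜ := fun u hu => by simpa using hD u hu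
  have := interior_mono hsub hu
  rw [interior_compl, closure_ball _ hβ] at this
  simpa using this

/-! ### The nonlinearity -/

theorem hasDerivAt_Fint (hf : Continuous f) (s : ℝ) : HasDerivAt (Fint f) (f s) s :=
  (hf.integral_hasStrictDerivAt 0 s).hasDerivAt

theorem continuous_Fint (hf : Continuous f) : Continuous (Fint f) :=
  continuous_iff_continuousAt.2 fun s => (hasDerivAt_Fint hf s).continuousAt

@[simp]
theorem Fint_zero : Fint f 0 = 0 := by simp [Fint]

theorem Fint_neg (hodd : ∀ s, f (-s) = -f s) (s : ℝ) : Fint f (-s) = Fint f s := by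
  have h := intervalIntegral.integral_comp_neg (a := s) (b := 0) f
  simp only [hodd, neg_zero] at h
  rw [intervalIntegral.integral_neg, intervalIntegral.integral_symm, neg_neg] at h
  exact h.symm

/-- The hypotheses on the nonlinearity under which branches of solutions are compared: (f1) with
the sign of `f` on `[0, β]` relaxed to that of its primitive, `C¹` regularity beyond `β`, and (f4')
with the real parameter `d` in place of `n - 1`. -/
structure Nonlinearity (d β : ℝ) (f : ℝ → ℝ) : Prop where
  one_le_d : 1 ≤ d
  beta_pos : 0 < β
  continuous : Continuous f
  odd : ∀ s, f (-s) = -f s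
  Fint_nonpos_of_mem : ∀ s ∈ Icc 0 β, Fint f s ≤ 0
  Fint_beta : Fint f β = 0
  pos : ∀ s, β ≤ s → 0 < f s
  contDiffOn : ContDiffOn ℝ 1 f (Ioi β)
  le_deriv_quotient : ∀ s, β < s → (d - 1) / 2 ≤ deriv (fun t => Fint f t / f t) s

namespace Nonlinearity

theorem d_pos (hN : Nonlinearity d β f) : 0 < d := one_pos.trans_le hN.one_le_d

theorem Fint_neg_beta (hN : Nonlinearity d β f) : Fint f (-β) = 0 := by
  rw [Fint_neg hN.odd, hN.Fint_beta]

theorem Fint_abs (hN : Nonlinearity d β f) (s : ℝ) : Fint f |s| = Fint f s := by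
  rcases abs_choice s with h | h <;> rw [h]
  exact Fint_neg hN.odd s

theorem Fint_nonpos (hN : Nonlinearity d β f) {s : ℝ} (hs : |s| ≤ β) : Fint f s ≤ 0 :=
  hN.Fint_abs s ▸ hN.Fint_nonpos_of_mem |s| ⟨abs_nonneg s, hs⟩

theorem strictMonoOn_Fint (hN : Nonlinearity d β f) : StrictMonoOn (Fint f) (Ici β) :=
  strictMonoOn_of_hasDerivWithinAt_pos (convex_Ici β) (continuous_Fint hN.continuous).continuousOn
    (fun s _ => (hasDerivAt_Fint hN.continuous s).hasDerivWithinAt)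
    fun s hs => hN.pos s (interior_subset hs)

theorem Fint_pos (hN : Nonlinearity d β f) {s : ℝ} (hs : β < |s|) : 0 < Fint f s :=
  hN.Fint_abs s ▸ hN.Fint_beta ▸ hN.strictMonoOn_Fint self_mem_Ici hs.le hs

theorem beta_lt_abs_iff (hN : Nonlinearity d β f) {s : ℝ} : β < |s| ↔ 0 < Fint f s :=
  ⟨hN.Fint_pos, fun hs => not_le.1 fun h => (hN.Fint_nonpos h).not_gt hs⟩

theorem neg_of_le_neg_beta (hN : Nonlinearity d β f) {s : ℝ} (hs : s ≤ -β) : f s < 0 := by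
  have := hN.pos (-s) (le_neg.1 hs)
  rw [hN.odd] at this
  exact neg_pos.1 this

theorem ne_zero (hN : Nonlinearity d β f) {s : ℝ} (hs : β ≤ |s|) : f s ≠ 0 := by
  rcases le_abs.1 hs with h | h
  · exact (hN.pos s h).ne'
  · exact (hN.neg_of_le_neg_beta (le_neg.1 h)).ne

theorem quotient_neg (hN : Nonlinearity d β f) (s : ℝ) :
    Fint f (-s) / f (-s) = -(Fint f s / f s) := by
  rw [Fint_neg hN.odd, hN.odd, div_neg]

theorem quotient_pos (hN : Nonlinearity d β f) {s : ℝ} (hs : β < s) : 0 < Fint f s / f s :=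
  div_pos (hN.Fint_pos (hs.trans_le (le_abs_self s))) (hN.pos s hs.le)

theorem contDiffAt (hN : Nonlinearity d β f) {s : ℝ} (hs : β < |s|) : ContDiffAt ℝ 1 f s := by
  have hright : ∀ t, β < t → ContDiffAt ℝ 1 f t := fun t ht =>
    hN.contDiffOn.contDiffAt (Ioi_mem_nhds ht)
  rcases lt_abs.1 hs with h | h
  · exact hright s h
  · have hreflect : f = fun t => -f (-t) := funext fun t => by rw [hN.odd, neg_neg]
    rw [hreflect]
    exact ((hright (-s) h).comp s contDiff_neg.contDiffAt).neg

theorem differentiableAt (hN : Nonlinearity d β f) {s : ℝ} (hs : β < |s|) :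
    DifferentiableAt ℝ f s :=
  (hN.contDiffAt hs).differentiableAt one_ne_zero

theorem hasDerivAt_quotient (hN : Nonlinearity d β f) {s : ℝ} (hs : β < |s|) :
    HasDerivAt (fun t => Fint f t / f t) (deriv (fun t => Fint f t / f t) s) s :=
  ((hasDerivAt_Fint hN.continuous s).differentiableAt.div (hN.differentiableAt hs)
    (hN.ne_zero hs.le)).hasDerivAt

theorem exists_deriv_quotient_pos (hN : Nonlinearity d β f) (hM : β < M) :
    ∃ c ∈ Ioo β M, 0 < deriv (fun t => Fint f t / f t) c := by
  obtain ⟨m, hβm, hmM⟩ := exists_between hM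
  obtain ⟨c, hc, hslope⟩ := exists_deriv_eq_slope (fun t => Fint f t / f t) hβm
    ((continuous_Fint hN.continuous).continuousOn.div hN.continuous.continuousOn
      fun t ht => (hN.pos t ht.1).ne')
    fun t ht => (hN.hasDerivAt_quotient
      (ht.1.trans_le (le_abs_self t))).differentiableAt.differentiableWithinAt
  refine ⟨c, ⟨hc.1, hc.2.trans hmM⟩, hslope ▸ ?_⟩
  rw [hN.Fint_beta, zero_div, sub_zero]
  exact div_pos (hN.quotient_pos hβm) (sub_pos.2 hβm)

theorem le_deriv_quotient_of_lt_abs (hN : Nonlinearity d β f) {s : ℝ} (hs : β < |s|) :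
    (d - 1) / 2 ≤ deriv (fun t => Fint f t / f t) s := by
  rcases lt_abs.1 hs with h | h
  · exact hN.le_deriv_quotient s h
  · have heven : deriv (fun t => Fint f t / f t) (-s) = deriv (fun t => Fint f t / f t) s := by
      rw [← neg_inj, ← deriv_comp_neg, ← deriv.fun_neg]
      exact congrArg₂ deriv (funext hN.quotient_neg) rfl
    exact heven ▸ hN.le_deriv_quotient (-s) h

end Nonlinearity

/-- The even primitive of `4 (d - 1) F / f` on `|s| ≥ β` vanishing at `±β`, which balances the
derivative of the other terms of the Pohozaev type functional. The integrand is truncated at `β`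
because `F / f` need not be defined below. -/
noncomputable def quotientPrimitive (d β : ℝ) (f : ℝ → ℝ) (s : ℝ) : ℝ :=
  4 * (d - 1) * ∫ t in β..|s|, Fint f (max t β) / f (max t β)

@[simp]
theorem quotientPrimitive_neg (s : ℝ) :
    quotientPrimitive d β f (-s) = quotientPrimitive d β f s := by
  simp only [quotientPrimitive, abs_neg]

theorem quotientPrimitive_one (s : ℝ) : quotientPrimitive 1 β f s = 0 := by
  simp [quotientPrimitive]

namespace Nonlinearity

theorem continuous_truncated_quotient (hN : Nonlinearity d β f) :
    Continuous fun t => Fint f (max t β) / f (max t β) := by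
  have hf := hN.continuous
  have hF := continuous_Fint hf
  have hne : ∀ t, f (max t β) ≠ 0 := fun t => (hN.pos _ (le_max_right t β)).ne'
  fun_prop (disch := assumption)

theorem hasDerivAt_integral_truncated_quotient (hN : Nonlinearity d β f) (s : ℝ) :
    HasDerivAt (fun x => ∫ t in β..x, Fint f (max t β) / f (max t β))
      (Fint f (max s β) / f (max s β)) s :=
  (hN.continuous_truncated_quotient.integral_hasStrictDerivAt β s).hasDerivAt

theorem continuous_quotientPrimitive (hN : Nonlinearity d β f) :
    Continuous (quotientPrimitive d β f) :=
  continuous_const.mul ((continuous_iff_continuousAt.2 fun s =>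
    (hN.hasDerivAt_integral_truncated_quotient s).continuousAt).comp continuous_abs)

theorem hasDerivAt_quotientPrimitive (hN : Nonlinearity d β f) {s : ℝ} (hs : β < |s|) :
    HasDerivAt (quotientPrimitive d β f) (4 * (d - 1) * (Fint f s / f s)) s := by
  have hint := hN.hasDerivAt_integral_truncated_quotient |s|
  rw [max_eq_left hs.le] at hint
  have hβ := hN.beta_pos
  rcases lt_abs.1 hs with h | h
  · refine ((hint.comp s (hasDerivAt_abs_pos (hβ.trans h))).const_mul
      (4 * (d - 1))).congr_deriv ?_
    rw [abs_of_pos (hβ.trans h), mul_one]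
  · have hs0 : s < 0 := by linarith
    refine ((hint.comp s (hasDerivAt_abs_neg hs0)).const_mul (4 * (d - 1))).congr_deriv ?_
    rw [abs_of_neg hs0, hN.quotient_neg]
    ring

theorem strictMonoOn_quotientPrimitive (hN : Nonlinearity d β f) (hd : 1 < d) :
    StrictMonoOn (quotientPrimitive d β f) (Ici β) := by
  refine strictMonoOn_of_hasDerivWithinAt_pos (convex_Ici β)
    hN.continuous_quotientPrimitive.continuousOn (f' := fun s => 4 * (d - 1) * (Fint f s / f s))
    ?_ ?_ <;> rw [interior_Ici] <;> intro s hs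
  · exact (hN.hasDerivAt_quotientPrimitive (lt_abs.2 (Or.inl hs))).hasDerivWithinAt
  · exact mul_pos (by linarith) (hN.quotient_pos hs)

end Nonlinearity

/-! ### Branches parametrized by the value of the solution -/

/-- A decreasing branch of a solution of `u'' + (d / x) u' + f u = 0`, parametrized by the value
`s ∈ (a, M)` of the solution: `r s` is the radius at which the value `s` is taken and `p s` is
`|u'|` there. The branch starts at the radius `T`, where `u = M` and `u' = 0`, and its energy
`u'² + 2 F(u)` is positive. -/
structure Branch (d : ℝ) (f : ℝ → ℝ) (a M T : ℝ) (r p : ℝ → ℝ) : Prop where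
  r_pos : ∀ s ∈ Ioo a M, 0 < r s
  p_pos : ∀ s ∈ Ioo a M, 0 < p s
  hasDerivAt_r : ∀ s ∈ Ioo a M, HasDerivAt r (-(1 / p s)) s
  hasDerivAt_p : ∀ s ∈ Ioo a M, HasDerivAt p (d / r s - f s / p s) s
  energy_pos : ∀ s ∈ Ioo a M, 0 < p s ^ 2 + 2 * Fint f s
  tendsto_r : Tendsto r (𝓝[<] M) (𝓝 T)
  tendsto_p : Tendsto p (𝓝[<] M) (𝓝 0)

/-- A branch which ends below `-β`, at the radius `T'`, with vanishing derivative. -/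
structure CrossingBranch (d β : ℝ) (f : ℝ → ℝ) (a T' M T : ℝ) (r p : ℝ → ℝ) : Prop
    extends Branch d f a M T r p where
  lt_neg_beta : a < -β
  tendsto_r_end : Tendsto r (𝓝[>] a) (𝓝 T')
  tendsto_p_end : Tendsto p (𝓝[>] a) (𝓝 0)

/-- The Pohozaev type functional along a branch: it is `-Qfun f H r` for
`H = -quotientPrimitive d β f`, since `r / r' = -(r p)` there. -/
noncomputable def pohozaev (d β : ℝ) (f r p : ℝ → ℝ) (s : ℝ) : ℝ :=
  r s ^ 2 * (p s ^ 2 + 2 * Fint f s) - 4 * (Fint f s / f s) * (r s * p s) +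
    quotientPrimitive d β f s

/-- The value of the functional `pohozaev` at a critical point of the solution, at the radius `T`
and with value `M`. -/
noncomputable def criticalPohozaev (d β : ℝ) (f : ℝ → ℝ) (T M : ℝ) : ℝ :=
  2 * T ^ 2 * Fint f M + quotientPrimitive d β f M

/-- The functional `Wfun`, that is `r √(u'² + 2 F(u))`, along a branch. -/
noncomputable def radialEnergy (f r p : ℝ → ℝ) (s : ℝ) : ℝ :=
  r s * √(p s ^ 2 + 2 * Fint f s)

namespace Branch

theorem mul_pos (hB : Branch d f a M T r p) {s : ℝ} (hs : s ∈ Ioo a M) : 0 < r s * p s :=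
  _root_.mul_pos (hB.r_pos s hs) (hB.p_pos s hs)

theorem continuousAt_r (hB : Branch d f a M T r p) {s : ℝ} (hs : s ∈ Ioo a M) :
    ContinuousAt r s := (hB.hasDerivAt_r s hs).continuousAt

theorem continuousAt_p (hB : Branch d f a M T r p) {s : ℝ} (hs : s ∈ Ioo a M) :
    ContinuousAt p s := (hB.hasDerivAt_p s hs).continuousAt

theorem hasDerivAt_mul (hB : Branch d f a M T r p) {s : ℝ} (hs : s ∈ Ioo a M) :
    HasDerivAt (fun t => r t * p t) (d - 1 - r s * f s / p s) s := by
  refine ((hB.hasDerivAt_r s hs).mul (hB.hasDerivAt_p s hs)).congr_deriv ?_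
  have hr := (hB.r_pos s hs).ne'
  have hp := (hB.p_pos s hs).ne'
  field_simp
  ring

theorem hasDerivAt_energy (hB : Branch d f a M T r p) (hf : Continuous f) {s : ℝ}
    (hs : s ∈ Ioo a M) :
    HasDerivAt (fun t => p t ^ 2 + 2 * Fint f t) (2 * d * p s / r s) s := by
  refine (((hB.hasDerivAt_p s hs).pow 2).add ((hasDerivAt_Fint hf s).const_mul 2)).congr_deriv ?_
  have hr := (hB.r_pos s hs).ne'
  have hp := (hB.p_pos s hs).ne'
  field_simp
  ring

theorem hasDerivAt_radialEnergy (hB : Branch d f a M T r p) (hf : Continuous f) {s : ℝ}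
    (hs : s ∈ Ioo a M) :
    HasDerivAt (radialEnergy f r p)
      (((d - 1) * p s ^ 2 - 2 * Fint f s) / (p s * √(p s ^ 2 + 2 * Fint f s))) s := by
  have hE := hB.energy_pos s hs
  have hr := (hB.r_pos s hs).ne'
  have hp := (hB.p_pos s hs).ne'
  have hsqrt := (Real.sqrt_pos.2 hE).ne'
  refine ((hB.hasDerivAt_r s hs).mul
    ((hB.hasDerivAt_energy hf hs).sqrt hE.ne')).congr_deriv ?_
  have hsq : √(p s ^ 2 + 2 * Fint f s) ^ 2 = p s ^ 2 + 2 * Fint f s := Real.sq_sqrt hE.le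
  field_simp
  rw [hsq]
  ring

theorem radialEnergy_eq (hB : Branch d f a M T r p) {s : ℝ} (hs : s ∈ Ioo a M)
    (hF : Fint f s = 0) : radialEnergy f r p s = r s * p s := by
  rw [radialEnergy, hF, mul_zero, add_zero, Real.sqrt_sq (hB.p_pos s hs).le]

theorem hasDerivAt_pohozaev (hB : Branch d f a M T r p) (hN : Nonlinearity d β f) {s : ℝ}
    (hs : s ∈ Ioo a M) (hβ : β < |s|) :
    HasDerivAt (pohozaev d β f r p)
      (-4 * (deriv (fun t => Fint f t / f t) s - (d - 1) / 2) * (r s * p s)) s := by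
  have hp := (hB.p_pos s hs).ne'
  have hf := hN.ne_zero hβ.le
  refine (((((hB.hasDerivAt_r s hs).pow 2).mul (hB.hasDerivAt_energy hN.continuous hs)).sub
    (((hN.hasDerivAt_quotient hβ).const_mul 4).mul (hB.hasDerivAt_mul hs))).add
    (hN.hasDerivAt_quotientPrimitive hβ)).congr_deriv ?_
  simp only [Pi.pow_apply]
  field_simp
  ring

theorem continuousAt_pohozaev (hB : Branch d f a M T r p) (hN : Nonlinearity d β f) {s : ℝ}
    (hs : s ∈ Ioo a M) (hβ : β ≤ |s|) : ContinuousAt (pohozaev d β f r p) s := by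
  have hr := hB.continuousAt_r hs
  have hp := hB.continuousAt_p hs
  have hF := (continuous_Fint hN.continuous).continuousAt (x := s)
  have hf := hN.continuous.continuousAt (x := s)
  have hK := hN.continuous_quotientPrimitive.continuousAt (x := s)
  have hne := hN.ne_zero hβ
  unfold pohozaev
  fun_prop (disch := assumption)

theorem antitoneOn_pohozaev (hB : Branch d f a M T r p) (hN : Nonlinearity d β f) {D : Set ℝ}
    (hD : Convex ℝ D) (hsub : D ⊆ Ioo a M) (hβ : ∀ s ∈ D, β ≤ |s|) :
    AntitoneOn (pohozaev d β f r p) D := by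
  refine antitoneOn_of_hasDerivWithinAt_nonpos hD
    (fun s hs => (hB.continuousAt_pohozaev hN (hsub hs) (hβ s hs)).continuousWithinAt)
    (fun s hs => (hB.hasDerivAt_pohozaev hN (hsub (interior_subset hs))
      (lt_abs_of_mem_interior hN.beta_pos.ne' hβ hs)).hasDerivWithinAt) fun s hs => ?_
  have hslope := hN.le_deriv_quotient_of_lt_abs
    (lt_abs_of_mem_interior hN.beta_pos.ne' hβ hs)
  have := mul_nonneg (sub_nonneg.2 hslope) (hB.mul_pos (hsub (interior_subset hs))).le
  linarith

end Branch

theorem Nonlinearity.tendsto_pohozaev (hN : Nonlinearity d β f) {l : Filter ℝ} (hl : l ≤ 𝓝 M)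
    (hM : β ≤ |M|) (hr : Tendsto r l (𝓝 T)) (hp : Tendsto p l (𝓝 0)) :
    Tendsto (pohozaev d β f r p) l (𝓝 (criticalPohozaev d β f T M)) := by
  have hF := ((continuous_Fint hN.continuous).tendsto M).mono_left hl
  have hf := (hN.continuous.tendsto M).mono_left hl
  have hK := (hN.continuous_quotientPrimitive.tendsto M).mono_left hl
  have hlim := (((hr.pow 2).mul ((hp.pow 2).add (hF.const_mul 2))).sub
    (((hF.div hf (hN.ne_zero hM)).const_mul 4).mul (hr.mul hp))).add hK
  refine (hlim.congr fun _ => rfl).trans (le_of_eq (congrArg 𝓝 ?_))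
  rw [criticalPohozaev]
  ring

theorem Branch.tendsto_pohozaev (hB : Branch d f a M T r p) (hN : Nonlinearity d β f)
    (hM : β < M) : Tendsto (pohozaev d β f r p) (𝓝[<] M) (𝓝 (criticalPohozaev d β f T M)) :=
  hN.tendsto_pohozaev nhdsWithin_le_nhds (hM.le.trans (le_abs_self M)) hB.tendsto_r hB.tendsto_p

namespace CrossingBranch

variable {T' : ℝ}

theorem lt_abs (hB : CrossingBranch d β f a T' M T r p) : β < |a| :=
  _root_.lt_abs.2 (Or.inr (lt_neg.1 hB.lt_neg_beta))

theorem tendsto_pohozaev_end (hB : CrossingBranch d β f a T' M T r p) (hN : Nonlinearity d β f) :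
    Tendsto (pohozaev d β f r p) (𝓝[>] a) (𝓝 (criticalPohozaev d β f T' a)) :=
  hN.tendsto_pohozaev nhdsWithin_le_nhds hB.lt_abs.le hB.tendsto_r_end hB.tendsto_p_end

theorem end_nonneg (hB : CrossingBranch d β f a T' M T r p) (hM : a < M) : 0 ≤ T' := by
  refine ge_of_tendsto hB.tendsto_r_end ?_
  filter_upwards [Ioo_mem_nhdsGT hM] with s hs using (hB.r_pos s hs).le

end CrossingBranch

/-! ### Local uniqueness in the inverse variables -/

theorem abs_inv_sub_inv_le {c x y : ℝ} (hc : 0 < c) (hx : c ≤ x) (hy : c ≤ y) :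
    |x⁻¹ - y⁻¹| ≤ (c ^ 2)⁻¹ * |x - y| := by
  have hx0 : 0 < x := hc.trans_le hx
  have hy0 : 0 < y := hc.trans_le hy
  rw [inv_sub_inv hx0.ne' hy0.ne', abs_div, abs_of_pos (mul_pos hx0 hy0), abs_sub_comm,
    div_eq_inv_mul]
  gcongr
  nlinarith

theorem exists_lipschitzOnWith_branch_field (d : ℝ) {c : ℝ} (hc : 0 < c) (B : ℝ) :
    ∃ L : NNReal, ∀ y, |y| ≤ B → LipschitzOnWith L
      (fun q : ℝ × ℝ => (-(1 / q.2), d / q.1 - y / q.2)) (Ici c ×ˢ Ici c) := by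
  refine ⟨Real.toNNReal ((1 + |d| + B) * (c ^ 2)⁻¹), fun y hy =>
    LipschitzOnWith.of_dist_le_mul fun q hq q' hq' => ?_⟩
  have hB : 0 ≤ B := (abs_nonneg y).trans hy
  have h₁ : |q.1⁻¹ - q'.1⁻¹| ≤ (c ^ 2)⁻¹ * dist q q' :=
    (abs_inv_sub_inv_le hc hq.1 hq'.1).trans (by gcongr; exact le_max_left _ _)
  have h₂ : |q.2⁻¹ - q'.2⁻¹| ≤ (c ^ 2)⁻¹ * dist q q' :=
    (abs_inv_sub_inv_le hc hq.2 hq'.2).trans (by gcongr; exact le_max_right _ _)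
  have hpos : 0 ≤ (c ^ 2)⁻¹ * dist q q' := by positivity
  rw [Real.coe_toNNReal _ (by positivity), Prod.dist_eq, Real.dist_eq, Real.dist_eq, mul_assoc]
  refine max_le ?_ ?_
  · rw [one_div, one_div, ← abs_neg, neg_sub_neg, neg_sub]
    nlinarith [abs_nonneg d]
  · calc |d / q.1 - y / q.2 - (d / q'.1 - y / q'.2)|
        = |d * (q.1⁻¹ - q'.1⁻¹) - y * (q.2⁻¹ - q'.2⁻¹)| := by congr 1; ring
      _ ≤ |d| * |q.1⁻¹ - q'.1⁻¹| + |y| * |q.2⁻¹ - q'.2⁻¹| := by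
        rw [← abs_mul, ← abs_mul]; exact abs_sub _ _
      _ ≤ |d| * ((c ^ 2)⁻¹ * dist q q') + B * ((c ^ 2)⁻¹ * dist q q') := by gcongr
      _ ≤ (1 + |d| + B) * ((c ^ 2)⁻¹ * dist q q') := by linarith

theorem eventuallyEq_of_branch_equations (hf : Continuous f) {s₀ : ℝ}
    (h₁ : ∀ᶠ s in 𝓝 s₀, HasDerivAt r₁ (-(1 / p₁ s)) s ∧ HasDerivAt p₁ (d / r₁ s - f s / p₁ s) s)
    (h₂ : ∀ᶠ s in 𝓝 s₀, HasDerivAt r₂ (-(1 / p₂ s)) s ∧ HasDerivAt p₂ (d / r₂ s - f s / p₂ s) s)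
    (hr₀ : 0 < r₁ s₀) (hp₀ : 0 < p₁ s₀) (hr : r₁ s₀ = r₂ s₀) (hp : p₁ s₀ = p₂ s₀) :
    ∀ᶠ s in 𝓝 s₀, r₁ s = r₂ s ∧ p₁ s = p₂ s := by
  obtain ⟨c, hc, hcmin⟩ := exists_between (lt_min hr₀ hp₀)
  obtain ⟨L, hL⟩ := exists_lipschitzOnWith_branch_field d hc (|f s₀| + 1)
  have hlip : ∀ᶠ s in 𝓝 s₀, LipschitzOnWith L
      (fun q : ℝ × ℝ => (-(1 / q.2), d / q.1 - f s / q.2)) (Ici c ×ˢ Ici c) :=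
    (hf.abs.continuousAt.eventually_lt continuousAt_const (lt_add_one |f s₀|)).mono
      fun s hs => hL (f s) hs.le
  have hsol : ∀ {r p : ℝ → ℝ}, (∀ᶠ s in 𝓝 s₀, HasDerivAt r (-(1 / p s)) s ∧
      HasDerivAt p (d / r s - f s / p s) s) → c < r s₀ → c < p s₀ →
      ∀ᶠ s in 𝓝 s₀, HasDerivAt (fun s => (r s, p s)) (-(1 / p s), d / r s - f s / p s) s ∧
        (r s, p s) ∈ Ici c ×ˢ Ici c := by
    intro r p h hcr hcp
    filter_upwards [h, h.self_of_nhds.1.continuousAt.eventually_const_lt hcr,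
      h.self_of_nhds.2.continuousAt.eventually_const_lt hcp] with s hs hrs hps
    exact ⟨hs.1.prodMk hs.2, hrs.le, hps.le⟩
  obtain ⟨hcr, hcp⟩ := lt_min_iff.1 hcmin
  have heq := ODE_solution_unique_of_eventually
    (v := fun s q => (-(1 / q.2), d / q.1 - f s / q.2)) (s := fun _ => Ici c ×ˢ Ici c) hlip
    (hsol h₁ hcr hcp) (hsol h₂ (hr ▸ hcr) (hp ▸ hcp)) (by rw [hr, hp])
  exact heq.mono fun s hs => Prod.mk.inj hs

theorem Branch.eventually_eq_of_eq_at (hB₁ : Branch d f a₁ M₁ T₁ r₁ p₁)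
    (hB₂ : Branch d f a₂ M₂ T₂ r₂ p₂) (hf : Continuous f) {s : ℝ} (hs₁ : s ∈ Ioo a₁ M₁)
    (hs₂ : s ∈ Ioo a₂ M₂) (hr : r₁ s = r₂ s) (hp : p₁ s = p₂ s) :
    ∀ᶠ t in 𝓝 s, r₁ t = r₂ t ∧ p₁ t = p₂ t :=
  eventuallyEq_of_branch_equations hf
    (Filter.mem_of_superset (isOpen_Ioo.mem_nhds hs₁) fun t ht =>
      ⟨hB₁.hasDerivAt_r t ht, hB₁.hasDerivAt_p t ht⟩)
    (Filter.mem_of_superset (isOpen_Ioo.mem_nhds hs₂) fun t ht =>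
      ⟨hB₂.hasDerivAt_r t ht, hB₂.hasDerivAt_p t ht⟩)
    (hB₁.r_pos s hs₁) (hB₁.p_pos s hs₁) hr hp

/-! ### Comparison of two branches -/

/-- The starting points of two branches, critical points at the radii `T₁`, `T₂` with values
`M₁ < M₂` above `β`, are ordered by `criticalPohozaev` as well, strictly unless `d = 1`. -/
structure StartLT (d β : ℝ) (f : ℝ → ℝ) (T₁ M₁ T₂ M₂ : ℝ) : Prop where
  beta_lt : β < M₁
  lt : M₁ < M₂
  critical_le : criticalPohozaev d β f T₁ M₁ ≤ criticalPohozaev d β f T₂ M₂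
  critical_lt : d = 1 ∨ criticalPohozaev d β f T₁ M₁ < criticalPohozaev d β f T₂ M₂

theorem StartLT.beta_lt_right (hS : StartLT d β f T₁ M₁ T₂ M₂) : β < M₂ := hS.beta_lt.trans hS.lt

theorem pohozaev_eq {s : ℝ} (hF : Fint f s = 0) :
    pohozaev d β f r p s = (r s * p s) ^ 2 + quotientPrimitive d β f s := by
  rw [pohozaev, hF]
  ring

theorem pohozaev_sub_of_mul_eq {s : ℝ} (hmul : r₂ s * p₂ s = r₁ s * p₁ s) :
    pohozaev d β f r₂ p₂ s - pohozaev d β f r₁ p₁ s =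
      2 * Fint f s * (r₂ s ^ 2 - r₁ s ^ 2) := by
  have hsq : (r₂ s * p₂ s) ^ 2 = (r₁ s * p₁ s) ^ 2 := by rw [hmul]
  simp only [pohozaev, hmul]
  linear_combination hsq

namespace Branch

theorem hasDerivAt_pohozaev_sub (hB₁ : Branch d f a₁ M₁ T₁ r₁ p₁)
    (hB₂ : Branch d f a₂ M₂ T₂ r₂ p₂) (hN : Nonlinearity d β f) {s : ℝ} (h₁ : s ∈ Ioo a₁ M₁)
    (h₂ : s ∈ Ioo a₂ M₂) (hβ : β < |s|) :
    HasDerivAt (fun s => pohozaev d β f r₂ p₂ s - pohozaev d β f r₁ p₁ s)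
      (-4 * (deriv (fun t => Fint f t / f t) s - (d - 1) / 2) *
        (r₂ s * p₂ s - r₁ s * p₁ s)) s :=
  ((hB₂.hasDerivAt_pohozaev hN h₂ hβ).sub (hB₁.hasDerivAt_pohozaev hN h₁ hβ)).congr_deriv
    (by ring)

theorem antitoneOn_pohozaev_sub (hB₁ : Branch d f a₁ M₁ T₁ r₁ p₁)
    (hB₂ : Branch d f a₂ M₂ T₂ r₂ p₂) (hN : Nonlinearity d β f) {D : Set ℝ} (hD : Convex ℝ D)
    (h₁ : D ⊆ Ioo a₁ M₁) (h₂ : D ⊆ Ioo a₂ M₂) (hβ : ∀ s ∈ D, β ≤ |s|)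
    (hmul : ∀ s ∈ interior D, r₁ s * p₁ s ≤ r₂ s * p₂ s) :
    AntitoneOn (fun s => pohozaev d β f r₂ p₂ s - pohozaev d β f r₁ p₁ s) D := by
  refine antitoneOn_of_hasDerivWithinAt_nonpos hD
    (fun s hs => ((hB₂.continuousAt_pohozaev hN (h₂ hs) (hβ s hs)).sub
      (hB₁.continuousAt_pohozaev hN (h₁ hs) (hβ s hs))).continuousWithinAt)
    (fun s hs => (hB₁.hasDerivAt_pohozaev_sub hB₂ hN (h₁ (interior_subset hs))
      (h₂ (interior_subset hs))
      (lt_abs_of_mem_interior hN.beta_pos.ne' hβ hs)).hasDerivWithinAt) fun s hs => ?_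
  have hslope := hN.le_deriv_quotient_of_lt_abs (lt_abs_of_mem_interior hN.beta_pos.ne' hβ hs)
  have := mul_nonneg (sub_nonneg.2 hslope) (sub_nonneg.2 (hmul s hs))
  linarith

theorem r_le_of_p_eq (hB₁ : Branch d f a₁ M₁ T₁ r₁ p₁) (hB₂ : Branch d f a₂ M₂ T₂ r₂ p₂)
    (hd : 0 < d) {s c : ℝ} (h₁ : s ∈ Ioo a₁ M₁) (h₂ : s ∈ Ioo a₂ M₂) (hsc : s < c)
    (hp : p₂ s - p₁ s = 0) (hpos : ∀ t ∈ Ioo s c, 0 < p₂ t - p₁ t) : r₂ s ≤ r₁ s := by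
  have hderiv := deriv_nonneg_of_pos_right hsc
    ((hB₂.hasDerivAt_p s h₂).sub (hB₁.hasDerivAt_p s h₁)) hp hpos
  rw [sub_eq_zero.1 hp] at hderiv
  have hdiv : d / r₁ s ≤ d / r₂ s := by linarith
  exact (div_le_div_iff_of_pos_left hd (hB₁.r_pos s h₁) (hB₂.r_pos s h₂)).1 hdiv

theorem r_le_of_mul_eq (hB₁ : Branch d f a₁ M₁ T₁ r₁ p₁) (hB₂ : Branch d f a₂ M₂ T₂ r₂ p₂)
    {s c : ℝ} (hf : 0 < f s) (h₁ : s ∈ Ioo a₁ M₁) (h₂ : s ∈ Ioo a₂ M₂) (hsc : s < c)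
    (hmul : r₂ s * p₂ s - r₁ s * p₁ s = 0)
    (hpos : ∀ t ∈ Ioo s c, 0 < r₂ t * p₂ t - r₁ t * p₁ t) : r₂ s ≤ r₁ s := by
  have hderiv := deriv_nonneg_of_pos_right hsc
    ((hB₂.hasDerivAt_mul h₂).sub (hB₁.hasDerivAt_mul h₁)) hmul hpos
  have hr₁ := hB₁.r_pos s h₁
  have hr₂ := hB₂.r_pos s h₂
  have hp₁ := hB₁.p_pos s h₁
  have hp₂ := hB₂.p_pos s h₂
  have hquot₁ : r₁ s * f s / p₁ s = r₁ s ^ 2 * (f s / (r₁ s * p₁ s)) := by field_simp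
  have hquot₂ : r₂ s * f s / p₂ s = r₂ s ^ 2 * (f s / (r₁ s * p₁ s)) := by
    rw [← sub_eq_zero.1 hmul]
    field_simp
  rw [hquot₁, hquot₂] at hderiv
  have hsq : r₂ s ^ 2 * (f s / (r₁ s * p₁ s)) ≤ r₁ s ^ 2 * (f s / (r₁ s * p₁ s)) := by linarith
  exact (pow_le_pow_iff_left₀ hr₂.le hr₁.le two_ne_zero).1
    (le_of_mul_le_mul_right hsq (by positivity))

theorem criticalPohozaev_le (hB : Branch d f a M T r p) (hN : Nonlinearity d β f) {s : ℝ}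
    (hs : s ∈ Ioo a M) (hβ : β ≤ s) : criticalPohozaev d β f T M ≤ pohozaev d β f r p s := by
  refine le_of_tendsto (hB.tendsto_pohozaev hN (hβ.trans_lt hs.2)) ?_
  filter_upwards [Ioo_mem_nhdsLT hs.2] with t ht
  exact hB.antitoneOn_pohozaev hN (convex_Ico s M) (fun u hu => ⟨hs.1.trans_le hu.1, hu.2⟩)
    (fun u hu => (hβ.trans hu.1).trans (le_abs_self u)) (left_mem_Ico.2 hs.2)
    (Ioo_subset_Ico_self ht) ht.1.le

theorem critical_sub_le_pohozaev_sub (hB₁ : Branch d f a₁ M₁ T₁ r₁ p₁)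
    (hB₂ : Branch d f a₂ M₂ T₂ r₂ p₂) (hN : Nonlinearity d β f) (hM : M₁ < M₂) {s : ℝ}
    (h₁ : s ∈ Ioo a₁ M₁) (h₂ : a₂ < s) (hβ : β ≤ s)
    (hmul : ∀ t ∈ Ioo s M₁, r₁ t * p₁ t ≤ r₂ t * p₂ t) :
    criticalPohozaev d β f T₂ M₂ - criticalPohozaev d β f T₁ M₁ ≤
      pohozaev d β f r₂ p₂ s - pohozaev d β f r₁ p₁ s := by
  have hM₁ : M₁ ∈ Ioo a₂ M₂ := ⟨h₂.trans h₁.2, hM⟩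
  have hβM₁ := hβ.trans h₁.2.le
  refine (sub_le_sub_right (hB₂.criticalPohozaev_le hN hM₁ hβM₁) _).trans ?_
  refine le_of_tendsto (((hB₂.continuousAt_pohozaev hN hM₁
    (hβM₁.trans (le_abs_self _))).tendsto.mono_left nhdsWithin_le_nhds).sub
      (hB₁.tendsto_pohozaev hN (hβ.trans_lt h₁.2))) ?_
  filter_upwards [Ioo_mem_nhdsLT h₁.2] with t ht
  exact hB₁.antitoneOn_pohozaev_sub hB₂ hN (convex_Ico s M₁)
    (fun u hu => ⟨h₁.1.trans_le hu.1, hu.2⟩)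
    (fun u hu => ⟨h₂.trans_le hu.1, hu.2.trans hM⟩)
    (fun u hu => (hβ.trans hu.1).trans (le_abs_self u))
    (by rwa [interior_Ico]) (left_mem_Ico.2 h₁.2) (Ioo_subset_Ico_self ht) ht.1.le

/-! ### Comparison above `β` -/

theorem pohozaev_sub_pos_at_beta (hB₁ : Branch d f a₁ M₁ T₁ r₁ p₁)
    (hB₂ : Branch d f a₂ M₂ T₂ r₂ p₂) (hN : Nonlinearity d β f)
    (hS : StartLT d β f T₁ M₁ T₂ M₂) (ha₁ : a₁ < β) (ha₂ : a₂ < β)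
    (hmul : ∀ t ∈ Ioo β M₁, r₁ t * p₁ t < r₂ t * p₂ t) :
    0 < pohozaev d β f r₂ p₂ β - pohozaev d β f r₁ p₁ β := by
  have hgap : ∀ s ∈ Ico β M₁, criticalPohozaev d β f T₂ M₂ - criticalPohozaev d β f T₁ M₁ ≤
      pohozaev d β f r₂ p₂ s - pohozaev d β f r₁ p₁ s := fun s hs =>
    hB₁.critical_sub_le_pohozaev_sub hB₂ hN hS.lt ⟨ha₁.trans_le hs.1, hs.2⟩
      (ha₂.trans_le hs.1) hs.1 fun t ht => (hmul t ⟨hs.1.trans_lt ht.1, ht.2⟩).le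
  have hβ : β ∈ Ico β M₁ := left_mem_Ico.2 hS.beta_lt
  rcases hS.critical_lt with rfl | hlt
  · -- If the difference vanished at `β` it would be constant on `[β, M₁)`, hence so would `F / f`.
    by_contra hnonpos
    obtain ⟨c, hc, hslope⟩ := hN.exists_deriv_quotient_pos hS.beta_lt
    have hmem₁ : Ico β M₁ ⊆ Ioo a₁ M₁ := fun s hs => ⟨ha₁.trans_le hs.1, hs.2⟩
    have hmem₂ : Ico β M₁ ⊆ Ioo a₂ M₂ := fun s hs => ⟨ha₂.trans_le hs.1, hs.2.trans hS.lt⟩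
    have hanti := hB₁.antitoneOn_pohozaev_sub hB₂ hN (convex_Ico β M₁) hmem₁ hmem₂
      (fun s hs => hs.1.trans (le_abs_self s)) fun s hs => (hmul s (by rwa [interior_Ico] at hs)).le
    have hzero : (fun s => pohozaev 1 β f r₂ p₂ s - pohozaev 1 β f r₁ p₁ s) =ᶠ[𝓝 c] fun _ => 0 := by
      filter_upwards [isOpen_Ioo.mem_nhds hc] with s hs
      exact le_antisymm ((hanti hβ (Ioo_subset_Ico_self hs) hs.1.le).trans (not_lt.1 hnonpos))
        ((sub_nonneg.2 hS.critical_le).trans (hgap s (Ioo_subset_Ico_self hs)))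
    have hderiv := (hB₁.hasDerivAt_pohozaev_sub hB₂ hN (hmem₁ (Ioo_subset_Ico_self hc))
      (hmem₂ (Ioo_subset_Ico_self hc)) (hc.1.trans_le (le_abs_self c))).unique
      ((hasDerivAt_const c (0 : ℝ)).congr_of_eventuallyEq hzero)
    have := _root_.mul_pos hslope (sub_pos.2 (hmul c hc))
    linarith
  · exact (sub_pos.2 hlt).trans_le (hgap β hβ)

theorem mul_sub_mul_ne_zero_of_pos_right (hB₁ : Branch d f a₁ M₁ T₁ r₁ p₁)
    (hB₂ : Branch d f a₂ M₂ T₂ r₂ p₂) (hN : Nonlinearity d β f)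
    (hS : StartLT d β f T₁ M₁ T₂ M₂) (ha₁ : a₁ < β) (ha₂ : a₂ < β) {s : ℝ} (hs : s ∈ Ico β M₁)
    (hpos : ∀ t ∈ Ioo s M₁, 0 < r₂ t * p₂ t - r₁ t * p₁ t) :
    r₂ s * p₂ s - r₁ s * p₁ s ≠ 0 := by
  intro hzero
  have h₁ : s ∈ Ioo a₁ M₁ := ⟨ha₁.trans_le hs.1, hs.2⟩
  have h₂ : s ∈ Ioo a₂ M₂ := ⟨ha₂.trans_le hs.1, hs.2.trans hS.lt⟩
  have hlt : ∀ t ∈ Ioo s M₁, r₁ t * p₁ t < r₂ t * p₂ t := fun t ht => sub_pos.1 (hpos t ht)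
  have hmul := sub_eq_zero.1 hzero
  have hgap := pohozaev_sub_of_mul_eq (d := d) (β := β) (f := f) hmul
  rcases hs.1.eq_or_lt with rfl | hβs
  · have := hB₁.pohozaev_sub_pos_at_beta hB₂ hN hS ha₁ ha₂ hlt
    rw [hgap, hN.Fint_beta, mul_zero, zero_mul] at this
    exact lt_irrefl _ this
  have hr : r₁ s = r₂ s := by
    refine le_antisymm ?_ (hB₁.r_le_of_mul_eq hB₂ (hN.pos s hs.1) h₁ h₂ hs.2 hzero hpos)
    have hnonneg := (sub_nonneg.2 hS.critical_le).trans
      (hB₁.critical_sub_le_pohozaev_sub hB₂ hN hS.lt h₁ h₂.1 hs.1 fun t ht => (hlt t ht).le)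
    rw [hgap] at hnonneg
    have hF := hN.Fint_pos (hβs.trans_le (le_abs_self s))
    exact (pow_le_pow_iff_left₀ (hB₁.r_pos s h₁).le (hB₂.r_pos s h₂).le two_ne_zero).1
      (sub_nonneg.1 (nonneg_of_mul_nonneg_right hnonneg (by positivity)))
  have hp : p₁ s = p₂ s := (mul_left_cancel₀ (hB₁.r_pos s h₁).ne' (hr ▸ hmul)).symm
  obtain ⟨t, ⟨hrt, hpt⟩, ht⟩ := (((hB₁.eventually_eq_of_eq_at hB₂ hN.continuous h₁ h₂ hr
    hp).filter_mono nhdsWithin_le_nhds).and (Ioo_mem_nhdsGT hs.2)).exists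
  have := hlt t ht
  rw [hrt, hpt] at this
  exact lt_irrefl _ this

theorem mul_lt_mul_of_beta_le (hB₁ : Branch d f a₁ M₁ T₁ r₁ p₁)
    (hB₂ : Branch d f a₂ M₂ T₂ r₂ p₂) (hN : Nonlinearity d β f)
    (hS : StartLT d β f T₁ M₁ T₂ M₂) (ha₁ : a₁ < β) (ha₂ : a₂ < β) {s : ℝ} (hs : s ∈ Ico β M₁) :
    r₁ s * p₁ s < r₂ s * p₂ s := by
  by_contra hle
  have hM₁ : M₁ ∈ Ioo a₂ M₂ := ⟨ha₂.trans hS.beta_lt, hS.lt⟩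
  have hnear : ∀ᶠ t in 𝓝[<] M₁, 0 < r₂ t * p₂ t - r₁ t * p₁ t := by
    refine ((((hB₂.hasDerivAt_mul hM₁).continuousAt.tendsto.mono_left nhdsWithin_le_nhds).sub
      (hB₁.tendsto_r.mul hB₁.tendsto_p)).eventually_const_lt ?_)
    rw [mul_zero, sub_zero]
    exact hB₂.mul_pos hM₁
  have hcont : ContinuousOn (fun t => r₂ t * p₂ t - r₁ t * p₁ t) (Ico s M₁) := fun t ht =>
    ((hB₂.hasDerivAt_mul ⟨ha₂.trans_le (hs.1.trans ht.1), ht.2.trans hS.lt⟩).continuousAt.sub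
      (hB₁.hasDerivAt_mul ⟨ha₁.trans_le (hs.1.trans ht.1), ht.2⟩).continuousAt).continuousWithinAt
  obtain ⟨t, ht, hzero, hpos⟩ := exists_last_zero_of_eventually_pos hs.2 hcont
    (sub_nonpos.2 (not_lt.1 hle)) hnear
  exact hB₁.mul_sub_mul_ne_zero_of_pos_right hB₂ hN hS ha₁ ha₂ ⟨hs.1.trans ht.1, ht.2⟩ hpos hzero

theorem p_lt_p_of_beta_le (hB₁ : Branch d f a₁ M₁ T₁ r₁ p₁)
    (hB₂ : Branch d f a₂ M₂ T₂ r₂ p₂) (hN : Nonlinearity d β f)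
    (hS : StartLT d β f T₁ M₁ T₂ M₂) (ha₁ : a₁ < β) (ha₂ : a₂ < β) {s : ℝ} (hs : s ∈ Ico β M₁) :
    p₁ s < p₂ s := by
  by_contra hle
  have hM₁ : M₁ ∈ Ioo a₂ M₂ := ⟨ha₂.trans hS.beta_lt, hS.lt⟩
  have hmem₁ : ∀ {t}, β ≤ t → t < M₁ → t ∈ Ioo a₁ M₁ := fun h h' => ⟨ha₁.trans_le h, h'⟩
  have hmem₂ : ∀ {t}, β ≤ t → t < M₁ → t ∈ Ioo a₂ M₂ := fun h h' =>
    ⟨ha₂.trans_le h, h'.trans hS.lt⟩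
  have hnear : ∀ᶠ t in 𝓝[<] M₁, 0 < p₂ t - p₁ t := by
    refine ((((hB₂.continuousAt_p hM₁).tendsto.mono_left nhdsWithin_le_nhds).sub
      hB₁.tendsto_p).eventually_const_lt ?_)
    rw [sub_zero]
    exact hB₂.p_pos _ hM₁
  have hcont : ContinuousOn (fun t => p₂ t - p₁ t) (Ico s M₁) := fun t ht =>
    ((hB₂.continuousAt_p (hmem₂ (hs.1.trans ht.1) ht.2)).sub
      (hB₁.continuousAt_p (hmem₁ (hs.1.trans ht.1) ht.2))).continuousWithinAt
  obtain ⟨t, ht, hzero, hpos⟩ := exists_last_zero_of_eventually_pos hs.2 hcont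
    (sub_nonpos.2 (not_lt.1 hle)) hnear
  have hβt := hs.1.trans ht.1
  have hmul := hB₁.mul_lt_mul_of_beta_le hB₂ hN hS ha₁ ha₂ ⟨hβt, ht.2⟩
  rw [sub_eq_zero.1 hzero] at hmul
  exact (hB₁.r_le_of_p_eq hB₂ hN.d_pos (hmem₁ hβt ht.2) (hmem₂ hβt ht.2) ht.2 hzero hpos).not_gt
    (lt_of_mul_lt_mul_right hmul (hB₁.p_pos t (hmem₁ hβt ht.2)).le)

end Branch

/-! ### Comparison on `[-β, β]` -/

theorem div_sqrt_sq_add_antitone {c p q : ℝ} (hc : c ≤ 0) (hp : 0 < p) (hpq : p ≤ q)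
    (hE : 0 < p ^ 2 + c) : q / √(q ^ 2 + c) ≤ p / √(p ^ 2 + c) := by
  have hq : 0 < q := hp.trans_le hpq
  have hE' : 0 < q ^ 2 + c := hE.trans_le (by gcongr)
  rw [div_le_div_iff₀ (Real.sqrt_pos.2 hE') (Real.sqrt_pos.2 hE)]
  calc q * √(p ^ 2 + c) = √(q ^ 2 * (p ^ 2 + c)) := by
        rw [Real.sqrt_mul (sq_nonneg q), Real.sqrt_sq hq.le]
    _ ≤ √(p ^ 2 * (q ^ 2 + c)) := Real.sqrt_le_sqrt (by nlinarith [pow_le_pow_left₀ hp.le hpq 2])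
    _ = p * √(q ^ 2 + c) := by rw [Real.sqrt_mul (sq_nonneg p), Real.sqrt_sq hp.le]

theorem radialEnergy_slope_antitone {c p q : ℝ} (hd : 1 ≤ d) (hc : c ≤ 0) (hp : 0 < p)
    (hpq : p ≤ q) (hE : 0 < p ^ 2 + c) :
    ((d - 1) * q ^ 2 - c) / (q * √(q ^ 2 + c)) ≤ ((d - 1) * p ^ 2 - c) / (p * √(p ^ 2 + c)) := by
  have hq : 0 < q := hp.trans_le hpq
  have hle : p ^ 2 + c ≤ q ^ 2 + c := by gcongr
  have hsqrt := Real.sqrt_pos.2 hE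
  have hsqrt' := Real.sqrt_pos.2 (hE.trans_le hle)
  have hsplit : ∀ {x y : ℝ}, 0 < x → 0 < y →
      ((d - 1) * x ^ 2 - c) / (x * y) = (d - 1) * (x / y) + -c / (x * y) := by
    intro x y hx hy
    field_simp
    ring
  rw [hsplit hq hsqrt', hsplit hp hsqrt]
  refine add_le_add (mul_le_mul_of_nonneg_left (div_sqrt_sq_add_antitone hc hp hpq hE)
    (sub_nonneg.2 hd)) (div_le_div_of_nonneg_left (neg_nonneg.2 hc) (by positivity) ?_)
  gcongr

namespace Branch

theorem antitoneOn_radialEnergy_sub (hB₁ : Branch d f a₁ M₁ T₁ r₁ p₁)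
    (hB₂ : Branch d f a₂ M₂ T₂ r₂ p₂) (hN : Nonlinearity d β f) {D : Set ℝ} (hD : Convex ℝ D)
    (h₁ : D ⊆ Ioo a₁ M₁) (h₂ : D ⊆ Ioo a₂ M₂) (hβ : ∀ s ∈ D, |s| ≤ β)
    (hp : ∀ s ∈ interior D, p₁ s ≤ p₂ s) :
    AntitoneOn (fun s => radialEnergy f r₂ p₂ s - radialEnergy f r₁ p₁ s) D := by
  have hderiv := fun s hs => (hB₂.hasDerivAt_radialEnergy hN.continuous (h₂ hs)).sub
    (hB₁.hasDerivAt_radialEnergy hN.continuous (h₁ hs)) (x := s)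
  refine antitoneOn_of_hasDerivWithinAt_nonpos hD
    (fun s hs => (hderiv s hs).continuousAt.continuousWithinAt)
    (fun s hs => (hderiv s (interior_subset hs)).hasDerivWithinAt) fun s hs => ?_
  have hs' := interior_subset hs
  have hF := hN.Fint_nonpos (hβ s hs')
  exact sub_nonpos.2 (radialEnergy_slope_antitone hN.one_le_d (by linarith)
    (hB₁.p_pos s (h₁ hs')) (hp s hs) (hB₁.energy_pos s (h₁ hs')))

theorem mul_sub_mul_le_radialEnergy_sub (hB₁ : Branch d f a₁ M₁ T₁ r₁ p₁)
    (hB₂ : Branch d f a₂ M₂ T₂ r₂ p₂) (hN : Nonlinearity d β f) (hM₁ : β < M₁) (hM₂ : β < M₂)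
    {s : ℝ} (ha₁ : a₁ < s) (ha₂ : a₂ < s) (hs : s ∈ Icc (-β) β)
    (hp : ∀ t ∈ Ioo s β, p₁ t < p₂ t) :
    r₂ β * p₂ β - r₁ β * p₁ β ≤ radialEnergy f r₂ p₂ s - radialEnergy f r₁ p₁ s := by
  have h := hB₁.antitoneOn_radialEnergy_sub hB₂ hN (convex_Icc s β)
    (fun t ht => ⟨ha₁.trans_le ht.1, ht.2.trans_lt hM₁⟩)
    (fun t ht => ⟨ha₂.trans_le ht.1, ht.2.trans_lt hM₂⟩)
    (fun t ht => abs_le.2 ⟨hs.1.trans ht.1, ht.2⟩)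
    (fun t ht => (hp t (by rwa [interior_Icc] at ht)).le) (left_mem_Icc.2 hs.2)
    (right_mem_Icc.2 hs.2) hs.2
  beta_reduce at h
  rwa [hB₁.radialEnergy_eq ⟨ha₁.trans_le hs.2, hM₁⟩ hN.Fint_beta,
    hB₂.radialEnergy_eq ⟨ha₂.trans_le hs.2, hM₂⟩ hN.Fint_beta] at h

theorem p_lt_p_of_abs_le_beta (hB₁ : Branch d f a₁ M₁ T₁ r₁ p₁)
    (hB₂ : Branch d f a₂ M₂ T₂ r₂ p₂) (hN : Nonlinearity d β f)
    (hS : StartLT d β f T₁ M₁ T₂ M₂) {s : ℝ} (ha₁ : a₁ < s) (ha₂ : a₂ < s)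
    (hs : s ∈ Icc (-β) β) : p₁ s < p₂ s := by
  have hβ : β ∈ Ico β M₁ := left_mem_Ico.2 hS.beta_lt
  have hpβ := hB₁.p_lt_p_of_beta_le hB₂ hN hS (ha₁.trans_le hs.2) (ha₂.trans_le hs.2) hβ
  have hmulβ := hB₁.mul_lt_mul_of_beta_le hB₂ hN hS (ha₁.trans_le hs.2) (ha₂.trans_le hs.2) hβ
  have hmem₁ : Icc s β ⊆ Ioo a₁ M₁ := fun t ht => ⟨ha₁.trans_le ht.1, ht.2.trans_lt hS.beta_lt⟩
  have hmem₂ : Icc s β ⊆ Ioo a₂ M₂ := fun t ht =>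
    ⟨ha₂.trans_le ht.1, ht.2.trans_lt hS.beta_lt_right⟩
  by_contra hle
  have hcont : ContinuousOn (fun t => p₂ t - p₁ t) (Icc s β) := fun t ht =>
    ((hB₂.continuousAt_p (hmem₂ ht)).sub (hB₁.continuousAt_p (hmem₁ ht))).continuousWithinAt
  obtain ⟨t, ht, hzero, hpos⟩ := exists_last_zero hs.2 hcont (sub_nonpos.2 (not_lt.1 hle))
    (sub_pos.2 hpβ)
  have ht' := Ico_subset_Icc_self ht
  have hpos' : ∀ u ∈ Ioo t β, 0 < p₂ u - p₁ u := fun u hu => hpos u (Ioo_subset_Ioc_self hu)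
  have hW := hB₁.mul_sub_mul_le_radialEnergy_sub hB₂ hN hS.beta_lt hS.beta_lt_right
    (hmem₁ ht').1 (hmem₂ ht').1 ⟨hs.1.trans ht.1, ht.2.le⟩ fun u hu => sub_pos.1 (hpos' u hu)
  have hlt : radialEnergy f r₁ p₁ t < radialEnergy f r₂ p₂ t := by linarith
  rw [radialEnergy, radialEnergy, sub_eq_zero.1 hzero] at hlt
  exact (hB₁.r_le_of_p_eq hB₂ hN.d_pos (hmem₁ ht') (hmem₂ ht') ht.2 hzero hpos').not_gt
    (lt_of_mul_lt_mul_right hlt (Real.sqrt_nonneg _))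

theorem mul_lt_mul_neg_beta (hB₁ : Branch d f a₁ M₁ T₁ r₁ p₁)
    (hB₂ : Branch d f a₂ M₂ T₂ r₂ p₂) (hN : Nonlinearity d β f)
    (hS : StartLT d β f T₁ M₁ T₂ M₂) (ha₁ : a₁ < -β) (ha₂ : a₂ < -β) :
    r₁ (-β) * p₁ (-β) < r₂ (-β) * p₂ (-β) := by
  have hβ : -β < β := neg_lt_self hN.beta_pos
  have hW := hB₁.mul_sub_mul_le_radialEnergy_sub hB₂ hN hS.beta_lt hS.beta_lt_right ha₁ ha₂
    (left_mem_Icc.2 hβ.le) fun t ht => hB₁.p_lt_p_of_abs_le_beta hB₂ hN hS (ha₁.trans ht.1)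
      (ha₂.trans ht.1) (Ioo_subset_Icc_self ht)
  rw [hB₁.radialEnergy_eq ⟨ha₁, hβ.trans hS.beta_lt⟩ hN.Fint_neg_beta,
    hB₂.radialEnergy_eq ⟨ha₂, hβ.trans hS.beta_lt_right⟩ hN.Fint_neg_beta] at hW
  have := hB₁.mul_lt_mul_of_beta_le hB₂ hN hS (ha₁.trans hβ) (ha₂.trans hβ)
    (left_mem_Ico.2 hS.beta_lt)
  linarith

theorem exists_pos_forall_le_mul (hB₁ : Branch d f 0 M₁ T₁ r₁ p₁)
    (hB₂ : Branch d f 0 M₂ T₂ r₂ p₂) (hN : Nonlinearity d β f)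
    (hS : StartLT d β f T₁ M₁ T₂ M₂) : ∃ δ > 0, ∀ s ∈ Ioo 0 β, δ ≤ r₂ s * p₂ s := by
  have hβ := hN.beta_pos
  have hmul := hB₁.mul_lt_mul_of_beta_le hB₂ hN hS hβ hβ (left_mem_Ico.2 hS.beta_lt)
  refine ⟨r₂ β * p₂ β - r₁ β * p₁ β, sub_pos.2 hmul, fun s hs => ?_⟩
  have hs' : s ∈ Icc (-β) β := ⟨by linarith [hs.1], hs.2.le⟩
  have h₁ : s ∈ Ioo 0 M₁ := ⟨hs.1, hs.2.trans hS.beta_lt⟩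
  have h₂ : s ∈ Ioo 0 M₂ := ⟨hs.1, hs.2.trans hS.beta_lt_right⟩
  have hW := hB₁.mul_sub_mul_le_radialEnergy_sub hB₂ hN hS.beta_lt hS.beta_lt_right hs.1 hs.1 hs'
    fun t ht => hB₁.p_lt_p_of_abs_le_beta hB₂ hN hS (hs.1.trans ht.1) (hs.1.trans ht.1)
      ⟨hs'.1.trans ht.1.le, ht.2.le⟩
  have hW₁ : 0 ≤ radialEnergy f r₁ p₁ s := mul_nonneg (hB₁.r_pos s h₁).le (Real.sqrt_nonneg _)
  have hW₂ : radialEnergy f r₂ p₂ s ≤ r₂ s * p₂ s := by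
    refine mul_le_mul_of_nonneg_left (Real.sqrt_le_iff.2 ⟨(hB₂.p_pos s h₂).le, ?_⟩)
      (hB₂.r_pos s h₂).le
    linarith [hN.Fint_nonpos (abs_le.2 hs')]
  linarith

/-! ### Comparison below `-β` -/

theorem sq_sub_sq_le_pohozaev_sub (hB₁ : Branch d f a₁ M₁ T₁ r₁ p₁)
    (hB₂ : Branch d f a₂ M₂ T₂ r₂ p₂) (hN : Nonlinearity d β f) (hM₁ : -β < M₁) (hM₂ : -β < M₂)
    {s : ℝ} (ha₁ : a₁ < s) (ha₂ : a₂ < s) (hs : s ≤ -β)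
    (hmul : ∀ t ∈ Ioo s (-β), r₁ t * p₁ t ≤ r₂ t * p₂ t) :
    (r₂ (-β) * p₂ (-β)) ^ 2 - (r₁ (-β) * p₁ (-β)) ^ 2 ≤
      pohozaev d β f r₂ p₂ s - pohozaev d β f r₁ p₁ s := by
  have h := hB₁.antitoneOn_pohozaev_sub hB₂ hN (convex_Icc s (-β))
    (fun t ht => ⟨ha₁.trans_le ht.1, ht.2.trans_lt hM₁⟩)
    (fun t ht => ⟨ha₂.trans_le ht.1, ht.2.trans_lt hM₂⟩)
    (fun t ht => le_abs.2 (Or.inr (le_neg.1 ht.2))) (by rwa [interior_Icc]) (left_mem_Icc.2 hs)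
    (right_mem_Icc.2 hs) hs
  simp only [pohozaev_eq hN.Fint_neg_beta] at h
  linarith

theorem min_sub_ne_zero_of_lt_neg_beta (hB₁ : Branch d f a₁ M₁ T₁ r₁ p₁)
    (hB₂ : Branch d f a₂ M₂ T₂ r₂ p₂) (hN : Nonlinearity d β f)
    (hS : StartLT d β f T₁ M₁ T₂ M₂) {s : ℝ} (ha₁ : a₁ < s) (ha₂ : a₂ < s) (hs : s < -β)
    (hpos : ∀ t ∈ Ioo s (-β), 0 < p₂ t - p₁ t ∧ 0 < r₂ t * p₂ t - r₁ t * p₁ t) :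
    min (p₂ s - p₁ s) (r₂ s * p₂ s - r₁ s * p₁ s) ≠ 0 := by
  intro hmin
  have hβ : -β < β := neg_lt_self hN.beta_pos
  have h₁ : s ∈ Ioo a₁ M₁ := ⟨ha₁, (hs.trans hβ).trans hS.beta_lt⟩
  have h₂ : s ∈ Ioo a₂ M₂ := ⟨ha₂, (hs.trans hβ).trans hS.beta_lt_right⟩
  have hp₁ := hB₁.p_pos s h₁
  obtain ⟨hp, hmul⟩ := le_min_iff.1 hmin.ge
  rcases hmul.eq_or_lt' with hzero | hlt
  · have hD := hB₁.sq_sub_sq_le_pohozaev_sub hB₂ hN (hβ.trans hS.beta_lt)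
      (hβ.trans hS.beta_lt_right) ha₁ ha₂ hs.le fun t ht => (sub_pos.1 (hpos t ht).2).le
    rw [pohozaev_sub_of_mul_eq (sub_eq_zero.1 hzero)] at hD
    have hsq := pow_lt_pow_left₀ (hB₁.mul_lt_mul_neg_beta hB₂ hN hS (ha₁.trans hs) (ha₂.trans hs))
      (hB₁.mul_pos ⟨ha₁.trans hs, hβ.trans hS.beta_lt⟩).le two_ne_zero
    have hF := hN.Fint_pos (lt_abs.2 (Or.inr (lt_neg.1 hs)))
    have hr : r₁ s < r₂ s :=
      (pow_lt_pow_iff_left₀ (hB₁.r_pos s h₁).le (hB₂.r_pos s h₂).le two_ne_zero).1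
        (sub_pos.1 (pos_of_mul_pos_right ((sub_pos.2 hsq).trans_le hD) (by positivity)))
    exact (mul_lt_mul hr (sub_nonneg.1 hp) hp₁ (hB₂.r_pos s h₂).le).ne' (sub_eq_zero.1 hzero)
  · have hzero : p₂ s - p₁ s = 0 := (min_eq_iff.1 hmin).elim And.left fun h => absurd h.1 hlt.ne'
    have hr := hB₁.r_le_of_p_eq hB₂ hN.d_pos h₁ h₂ hs hzero fun t ht => (hpos t ht).1
    rw [sub_eq_zero.1 hzero, sub_pos] at hlt
    exact hr.not_gt (lt_of_mul_lt_mul_right hlt hp₁.le)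

theorem p_lt_p_and_mul_lt_mul_of_le_neg_beta (hB₁ : Branch d f a₁ M₁ T₁ r₁ p₁)
    (hB₂ : Branch d f a₂ M₂ T₂ r₂ p₂) (hN : Nonlinearity d β f)
    (hS : StartLT d β f T₁ M₁ T₂ M₂) {s : ℝ} (ha₁ : a₁ < s) (ha₂ : a₂ < s) (hs : s ≤ -β) :
    p₁ s < p₂ s ∧ r₁ s * p₁ s < r₂ s * p₂ s := by
  have hβ : -β < β := neg_lt_self hN.beta_pos
  have hmem₁ : Icc s (-β) ⊆ Ioo a₁ M₁ := fun t ht =>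
    ⟨ha₁.trans_le ht.1, ht.2.trans_lt (hβ.trans hS.beta_lt)⟩
  have hmem₂ : Icc s (-β) ⊆ Ioo a₂ M₂ := fun t ht =>
    ⟨ha₂.trans_le ht.1, ht.2.trans_lt (hβ.trans hS.beta_lt_right)⟩
  have hcont : ContinuousOn (fun t => min (p₂ t - p₁ t) (r₂ t * p₂ t - r₁ t * p₁ t))
      (Icc s (-β)) := fun t ht =>
    (ContinuousAt.inf ((hB₂.continuousAt_p (hmem₂ ht)).sub (hB₁.continuousAt_p (hmem₁ ht)))
      ((hB₂.hasDerivAt_mul (hmem₂ ht)).continuousAt.sub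
        (hB₁.hasDerivAt_mul (hmem₁ ht)).continuousAt)).continuousWithinAt
  have hpβ := hB₁.p_lt_p_of_abs_le_beta hB₂ hN hS (ha₁.trans_le hs) (ha₂.trans_le hs)
    (left_mem_Icc.2 hβ.le)
  have hmulβ := hB₁.mul_lt_mul_neg_beta hB₂ hN hS (ha₁.trans_le hs) (ha₂.trans_le hs)
  by_contra hnot
  obtain ⟨t, ht, hzero, hpos⟩ := exists_last_zero hs hcont
    (not_lt.1 fun h => hnot ((lt_min_iff.1 h).imp sub_pos.1 sub_pos.1))
    (lt_min (sub_pos.2 hpβ) (sub_pos.2 hmulβ))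
  exact hB₁.min_sub_ne_zero_of_lt_neg_beta hB₂ hN hS (ha₁.trans_le ht.1) (ha₂.trans_le ht.1) ht.2
    (fun u hu => lt_min_iff.1 (hpos u (Ioo_subset_Ioc_self hu))) hzero

theorem exists_pos_forall_le_pohozaev_sub (hB₁ : Branch d f a₁ M₁ T₁ r₁ p₁)
    (hB₂ : Branch d f a₂ M₂ T₂ r₂ p₂) (hN : Nonlinearity d β f)
    (hS : StartLT d β f T₁ M₁ T₂ M₂) (ha₁ : a₁ < -β) (ha₂ : a₂ < -β) :
    ∃ δ > 0, ∀ s, a₁ < s → a₂ < s → s ≤ -β →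
      δ ≤ pohozaev d β f r₂ p₂ s - pohozaev d β f r₁ p₁ s := by
  have hβ : -β < β := neg_lt_self hN.beta_pos
  refine ⟨_, sub_pos.2 (pow_lt_pow_left₀ (hB₁.mul_lt_mul_neg_beta hB₂ hN hS ha₁ ha₂)
    (hB₁.mul_pos ⟨ha₁, hβ.trans hS.beta_lt⟩).le two_ne_zero), fun s h₁ h₂ hs => ?_⟩
  exact hB₁.sq_sub_sq_le_pohozaev_sub hB₂ hN (hβ.trans hS.beta_lt) (hβ.trans hS.beta_lt_right)
    h₁ h₂ hs fun t ht => (hB₁.p_lt_p_and_mul_lt_mul_of_le_neg_beta hB₂ hN hS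
      (h₁.trans ht.1) (h₂.trans ht.1) ht.2.le).2.le

theorem antitoneOn_p_sub (hB₁ : Branch d f a₁ M₁ T₁ r₁ p₁) (hB₂ : Branch d f a₂ M₂ T₂ r₂ p₂)
    (hd : 0 ≤ d) {D : Set ℝ} (hD : Convex ℝ D) (h₁ : D ⊆ Ioo a₁ M₁) (h₂ : D ⊆ Ioo a₂ M₂)
    (hf : ∀ s ∈ interior D, f s ≤ 0) (hr : ∀ s ∈ interior D, r₁ s ≤ r₂ s)
    (hp : ∀ s ∈ interior D, p₁ s ≤ p₂ s) : AntitoneOn (fun s => p₂ s - p₁ s) D := by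
  have hderiv := fun s hs => (hB₂.hasDerivAt_p s (h₂ hs)).sub (hB₁.hasDerivAt_p s (h₁ hs))
  refine antitoneOn_of_hasDerivWithinAt_nonpos hD
    (fun s hs => (hderiv s hs).continuousAt.continuousWithinAt)
    (fun s hs => (hderiv s (interior_subset hs)).hasDerivWithinAt) fun s hs => ?_
  have hdr : d / r₂ s ≤ d / r₁ s :=
    div_le_div_of_nonneg_left hd (hB₁.r_pos s (h₁ (interior_subset hs))) (hr s hs)
  have hfp : -f s / p₂ s ≤ -f s / p₁ s := div_le_div_of_nonneg_left
    (neg_nonneg.2 (hf s hs)) (hB₁.p_pos s (h₁ (interior_subset hs))) (hp s hs)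
  rw [neg_div, neg_div] at hfp
  linarith

end Branch

/-! ### Comparison of the next critical points -/

namespace CrossingBranch

variable {T₁' T₂' : ℝ}

theorem end_lt_end_of_ends_eq (hB₁ : CrossingBranch d β f a T₁' M₁ T₁ r₁ p₁)
    (hB₂ : CrossingBranch d β f a T₂' M₂ T₂ r₂ p₂) (hN : Nonlinearity d β f)
    (hS : StartLT d β f T₁ M₁ T₂ M₂) : T₁' < T₂' := by
  obtain ⟨δ, hδ, hgap⟩ := hB₁.exists_pos_forall_le_pohozaev_sub hB₂.toBranch hN hS
    hB₁.lt_neg_beta hB₂.lt_neg_beta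
  have hlim : δ ≤ criticalPohozaev d β f T₂' a - criticalPohozaev d β f T₁' a := by
    refine ge_of_tendsto ((hB₂.tendsto_pohozaev_end hN).sub (hB₁.tendsto_pohozaev_end hN)) ?_
    filter_upwards [Ioo_mem_nhdsGT hB₁.lt_neg_beta] with s hs using hgap s hs.1 hs.1 hs.2.le
  have hF := hN.Fint_pos hB₁.lt_abs
  have haM₂ : a < M₂ := by linarith [hB₁.lt_neg_beta, hN.beta_pos, hS.beta_lt_right]
  by_contra hle
  have := pow_le_pow_left₀ (hB₂.end_nonneg haM₂) (not_lt.1 hle) 2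
  unfold criticalPohozaev at hlim
  nlinarith

theorem ends_ne (hB₁ : CrossingBranch d β f a₁ T₁' M₁ T₁ r₁ p₁)
    (hB₂ : CrossingBranch d β f a₂ T₂' M₂ T₂ r₂ p₂) (hN : Nonlinearity d β f)
    (hS : StartLT d β f T₁ M₁ T₂ M₂) : a₁ ≠ a₂ := by
  rintro rfl
  have hβ := hN.beta_pos
  have hT := hB₁.end_lt_end_of_ends_eq hB₂ hN hS
  obtain ⟨c, hc, hr⟩ := (mem_nhdsGT_iff_exists_mem_Ioc_Ioo_subset hB₁.lt_neg_beta).1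
    (hB₁.tendsto_r_end.eventually_lt hB₂.tendsto_r_end hT)
  have hp : ∀ s ∈ Ioo a₁ c, p₁ s < p₂ s := fun s hs =>
    (hB₁.p_lt_p_and_mul_lt_mul_of_le_neg_beta hB₂.toBranch hN hS hs.1 hs.1
      (hs.2.le.trans hc.2)).1
  have hanti : AntitoneOn (fun s => p₂ s - p₁ s) (Ioo a₁ c) :=
    hB₁.antitoneOn_p_sub hB₂.toBranch hN.d_pos.le (convex_Ioo a₁ c)
      (Ioo_subset_Ioo_right (by linarith [hc.2, hS.beta_lt]))
      (Ioo_subset_Ioo_right (by linarith [hc.2, hS.beta_lt_right]))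
      (fun s hs => (hN.neg_of_le_neg_beta ((interior_subset hs).2.le.trans hc.2)).le)
      (fun s hs => (hr (interior_subset hs)).le) fun s hs => (hp s (interior_subset hs)).le
  obtain ⟨q, hq⟩ := exists_between hc.1
  have hle : p₂ q - p₁ q ≤ 0 - 0 := by
    refine ge_of_tendsto (hB₂.tendsto_p_end.sub hB₁.tendsto_p_end) ?_
    filter_upwards [Ioo_mem_nhdsGT hq.1] with s hs
    exact hanti ⟨hs.1, hs.2.trans hq.2⟩ hq hs.2.le
  linarith [hp q hq]

theorem end_lt_end (hB₁ : CrossingBranch d β f a₁ T₁' M₁ T₁ r₁ p₁)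
    (hB₂ : CrossingBranch d β f a₂ T₂' M₂ T₂ r₂ p₂) (hN : Nonlinearity d β f)
    (hS : StartLT d β f T₁ M₁ T₂ M₂) : a₂ < a₁ := by
  refine lt_of_le_of_ne (not_lt.1 fun hlt => ?_) (hB₁.ends_ne hB₂ hN hS).symm
  have hmem : a₂ ∈ Ioo a₁ M₁ := ⟨hlt, by linarith [hB₂.lt_neg_beta, hN.beta_pos, hS.beta_lt]⟩
  have hle : p₁ a₂ ≤ 0 := by
    refine le_of_tendsto_of_tendsto
      ((hB₁.continuousAt_p hmem).tendsto.mono_left nhdsWithin_le_nhds) hB₂.tendsto_p_end ?_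
    filter_upwards [Ioo_mem_nhdsGT hB₂.lt_neg_beta] with s hs
    exact (hB₁.p_lt_p_and_mul_lt_mul_of_le_neg_beta hB₂.toBranch hN hS (hlt.trans hs.1) hs.1
      hs.2.le).1.le
  exact hle.not_gt (hB₁.p_pos a₂ hmem)

theorem criticalPohozaev_end_lt (hB₁ : CrossingBranch d β f a₁ T₁' M₁ T₁ r₁ p₁)
    (hB₂ : CrossingBranch d β f a₂ T₂' M₂ T₂ r₂ p₂) (hN : Nonlinearity d β f)
    (hS : StartLT d β f T₁ M₁ T₂ M₂) :
    criticalPohozaev d β f T₁' a₁ < criticalPohozaev d β f T₂' a₂ := by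
  have hlt := hB₁.end_lt_end hB₂ hN hS
  have hmem : a₁ ∈ Ioo a₂ M₂ :=
    ⟨hlt, by linarith [hB₁.lt_neg_beta, hN.beta_pos, hS.beta_lt_right]⟩
  have hle : pohozaev d β f r₂ p₂ a₁ ≤ criticalPohozaev d β f T₂' a₂ := by
    refine ge_of_tendsto (hB₂.tendsto_pohozaev_end hN) ?_
    filter_upwards [Ioo_mem_nhdsGT hlt] with s hs
    exact hB₂.antitoneOn_pohozaev hN (convex_Ioc a₂ a₁)
      (fun u hu => ⟨hu.1, hu.2.trans_lt hmem.2⟩)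
      (fun u hu => le_abs.2 (Or.inr (le_neg.1 (hu.2.trans hB₁.lt_neg_beta.le))))
      (Ioo_subset_Ioc_self hs) (right_mem_Ioc.2 hlt) hs.2.le
  obtain ⟨δ, hδ, hgap⟩ := hB₁.exists_pos_forall_le_pohozaev_sub hB₂.toBranch hN hS
    hB₁.lt_neg_beta hB₂.lt_neg_beta
  have hlim : δ ≤ pohozaev d β f r₂ p₂ a₁ - criticalPohozaev d β f T₁' a₁ := by
    refine ge_of_tendsto (((hB₂.continuousAt_pohozaev hN hmem hB₁.lt_abs.le).tendsto.mono_left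
      nhdsWithin_le_nhds).sub (hB₁.tendsto_pohozaev_end hN)) ?_
    filter_upwards [Ioo_mem_nhdsGT hB₁.lt_neg_beta] with s hs
    exact hgap s hs.1 (hlt.trans hs.1) hs.2.le
  linarith

theorem startLT_neg (hB₁ : CrossingBranch d β f a₁ T₁' M₁ T₁ r₁ p₁)
    (hB₂ : CrossingBranch d β f a₂ T₂' M₂ T₂ r₂ p₂) (hN : Nonlinearity d β f)
    (hS : StartLT d β f T₁ M₁ T₂ M₂) : StartLT d β f T₁' (-a₁) T₂' (-a₂) := by
  have hcritical := hB₁.criticalPohozaev_end_lt hB₂ hN hS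
  have heven : ∀ T s, criticalPohozaev d β f T (-s) = criticalPohozaev d β f T s := fun T s => by
    rw [criticalPohozaev, Fint_neg hN.odd, quotientPrimitive_neg, criticalPohozaev]
  rw [← heven T₁', ← heven T₂'] at hcritical
  exact ⟨lt_neg.1 hB₁.lt_neg_beta, neg_lt_neg (hB₁.end_lt_end hB₂ hN hS), hcritical.le,
    Or.inr hcritical⟩

end CrossingBranch

/-! ### Radial solutions -/

variable {v w v₁ w₁ v₂ w₂ : ℝ → ℝ}

/-- `v`, with derivative `w`, solves `v'' + (d / x) v' + f v = 0` on `(T, ∞)` and has vanishing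
derivative at the radius `T`. The derivative at `T` is only encoded as the limit of `w`, so that
`T = 0` is allowed. -/
structure RadialSolution (d : ℝ) (f : ℝ → ℝ) (T : ℝ) (v w : ℝ → ℝ) : Prop where
  T_nonneg : 0 ≤ T
  continuousOn : ContinuousOn v (Ici T)
  continuousOn_slope : ContinuousOn w (Ici T)
  slope_eq_zero : w T = 0
  hasDerivAt : ∀ x, T < x → HasDerivAt v (w x) x
  hasDerivAt_slope : ∀ x, T < x → HasDerivAt w (-(d / x * w x) - f (v x)) x

/-- The energy `v'² + 2 F(v)` of a function `v` with derivative `w`. -/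
noncomputable def energy (f v w : ℝ → ℝ) (x : ℝ) : ℝ := w x ^ 2 + 2 * Fint f (v x)

theorem hasDerivAt_rpow_mul {x c : ℝ} (hx : 0 < x) (hw : HasDerivAt w (-(d / x * w x) - c) x) :
    HasDerivAt (fun y => y ^ d * w y) (-(x ^ d * c)) x := by
  refine ((Real.hasDerivAt_rpow_const (p := d) (Or.inl hx.ne')).mul hw).congr_deriv ?_
  rw [Real.rpow_sub_one hx.ne']
  field_simp
  ring

namespace RadialSolution

theorem pos (hS : RadialSolution d f T v w) {x : ℝ} (hx : T < x) : 0 < x :=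
  hS.T_nonneg.trans_lt hx

theorem neg (hS : RadialSolution d f T v w) (hodd : ∀ s, f (-s) = -f s) :
    RadialSolution d f T (-v) (-w) where
  T_nonneg := hS.T_nonneg
  continuousOn := hS.continuousOn.neg
  continuousOn_slope := hS.continuousOn_slope.neg
  slope_eq_zero := by simp [hS.slope_eq_zero]
  hasDerivAt x hx := (hS.hasDerivAt x hx).neg
  hasDerivAt_slope x hx := (hS.hasDerivAt_slope x hx).neg.congr_deriv (by
    simp only [Pi.neg_apply, hodd]
    ring)

theorem restart (hS : RadialSolution d f T v w) {x : ℝ} (hx : T < x) (hw : w x = 0) :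
    RadialSolution d f x v w where
  T_nonneg := (hS.pos hx).le
  continuousOn := hS.continuousOn.mono (Ici_subset_Ici.2 hx.le)
  continuousOn_slope := hS.continuousOn_slope.mono (Ici_subset_Ici.2 hx.le)
  slope_eq_zero := hw
  hasDerivAt y hy := hS.hasDerivAt y (hx.trans hy)
  hasDerivAt_slope y hy := hS.hasDerivAt_slope y (hx.trans hy)

theorem hasDerivAt_energy (hS : RadialSolution d f T v w) (hf : Continuous f) {x : ℝ}
    (hx : T < x) : HasDerivAt (energy f v w) (-(2 * d / x * w x ^ 2)) x := by
  refine (((hS.hasDerivAt_slope x hx).pow 2).add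
    (((hasDerivAt_Fint hf (v x)).comp x (hS.hasDerivAt x hx)).const_mul 2)).congr_deriv ?_
  ring

theorem antitoneOn_energy (hS : RadialSolution d f T v w) (hf : Continuous f) (hd : 0 ≤ d) :
    AntitoneOn (energy f v w) (Ici T) := by
  refine antitoneOn_of_hasDerivWithinAt_nonpos (convex_Ici T)
    (f' := fun x => -(2 * d / x * w x ^ 2))
    ((hS.continuousOn_slope.pow 2).add
      (((continuous_Fint hf).comp_continuousOn hS.continuousOn).const_mul 2)) ?_ ?_ <;>
    rw [interior_Ici]
  · exact fun x hx => (hS.hasDerivAt_energy hf hx).hasDerivWithinAt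
  · intro x hx
    have := hS.pos hx
    exact neg_nonpos.2 (by positivity)

theorem slope_neg (hS : RadialSolution d f T v w) (hd : 0 < d) {R : ℝ} (hR : T < R)
    (hf : ∀ x ∈ Ioo T R, 0 < f (v x)) : w R < 0 := by
  have hanti : StrictAntiOn (fun x => x ^ d * w x) (Icc T R) := by
    refine strictAntiOn_of_hasDerivWithinAt_neg (convex_Icc T R)
      (f' := fun x => -(x ^ d * f (v x)))
      ((continuousOn_id.rpow_const fun _ _ => Or.inr hd.le).mul
        (hS.continuousOn_slope.mono Icc_subset_Ici_self)) ?_ ?_ <;> rw [interior_Icc]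
    · exact fun x hx =>
        (hasDerivAt_rpow_mul (hS.pos hx.1) (hS.hasDerivAt_slope x hx.1)).hasDerivWithinAt
    · exact fun x hx =>
        neg_neg_of_pos (mul_pos (Real.rpow_pos_of_pos (hS.pos hx.1) d) (hf x hx))
  have hlt : R ^ d * w R < T ^ d * w T := hanti (left_mem_Icc.2 hR.le) (right_mem_Icc.2 hR.le) hR
  rw [hS.slope_eq_zero, mul_zero] at hlt
  exact neg_of_mul_neg_right hlt (Real.rpow_pos_of_pos (hS.pos hR) d).le

theorem exists_slope_neg (hS : RadialSolution d f T v w) (hN : Nonlinearity d β f)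
    (hM : β < v T) : ∃ c, T < c ∧ ∀ x ∈ Ioc T c, w x < 0 := by
  have hnear : ∀ᶠ x in 𝓝[>] T, β < v x :=
    ((hS.continuousOn T self_mem_Ici).mono Ioi_subset_Ici_self).eventually_const_lt hM
  obtain ⟨c, hc, hsub⟩ := mem_nhdsGT_iff_exists_Ioc_subset.1 hnear
  exact ⟨c, hc, fun x hx => hS.slope_neg hN.d_pos hx.1 fun y hy =>
    hN.pos _ (hsub ⟨hy.1, hy.2.le.trans hx.2⟩).le⟩

theorem strictAntiOn (hS : RadialSolution d f T v w) {U : Set ℝ} (hU : Convex ℝ U)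
    (hUT : U ⊆ Ici T) (hw : ∀ x ∈ interior U, w x < 0) : StrictAntiOn v U :=
  strictAntiOn_of_hasDerivWithinAt_neg hU (hS.continuousOn.mono hUT)
    (fun x hx => (hS.hasDerivAt x (by simpa using interior_mono hUT hx)).hasDerivWithinAt) hw

end RadialSolution

/-! ### Decaying solutions -/

/-- A radial solution which tends to zero at infinity. -/
structure DecayingSolution (d : ℝ) (f : ℝ → ℝ) (T : ℝ) (v w : ℝ → ℝ) : Prop
    extends RadialSolution d f T v w where
  tendsto_zero : Tendsto v atTop (𝓝 0)

namespace DecayingSolution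

theorem restart_neg (hS : DecayingSolution d f T v w) (hodd : ∀ s, f (-s) = -f s) {x : ℝ}
    (hx : T < x) (hw : w x = 0) : DecayingSolution d f x (-v) (-w) where
  toRadialSolution := (hS.restart hx hw).neg hodd
  tendsto_zero := neg_zero (G := ℝ) ▸ hS.tendsto_zero.neg

theorem energy_nonneg (hS : DecayingSolution d f T v w) (hf : Continuous f) (hd : 0 ≤ d) {x : ℝ}
    (hx : T ≤ x) : 0 ≤ energy f v w x := by
  have hlim : Tendsto (fun y => 2 * Fint f (v y)) atTop (𝓝 0) := by
    simpa using (((continuous_Fint hf).tendsto 0).comp hS.tendsto_zero).const_mul 2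
  refine le_of_tendsto hlim ?_
  filter_upwards [eventually_ge_atTop x] with y hy
  exact (le_add_of_nonneg_left (sq_nonneg (w y))).trans
    (hS.antitoneOn_energy hf hd hx (hx.trans hy) hy)

theorem slope_eq_zero_of_energy_nonpos (hS : DecayingSolution d f T v w) (hf : Continuous f)
    (hd : 0 < d) {x y : ℝ} (hx : T ≤ x) (hE : energy f v w x ≤ 0) (hy : x < y) : w y = 0 := by
  have hTy := hx.trans_lt hy
  have hzero : energy f v w =ᶠ[𝓝 y] fun _ => 0 := by
    filter_upwards [Ioi_mem_nhds hy] with z hz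
    have hTz := hx.trans (le_of_lt hz)
    exact le_antisymm ((hS.antitoneOn_energy hf hd.le hx hTz (le_of_lt hz)).trans hE)
      (hS.energy_nonneg hf hd.le hTz)
  have hderiv := (hS.hasDerivAt_energy hf hTy).unique
    ((hasDerivAt_const y (0 : ℝ)).congr_of_eventuallyEq hzero)
  have hcoef : 2 * d / y ≠ 0 := div_ne_zero (by positivity) (hS.pos hTy).ne'
  simpa [hcoef] using hderiv

theorem eq_zero_of_energy_nonpos (hS : DecayingSolution d f T v w) (hf : Continuous f)
    (hd : 0 < d) {x y : ℝ} (hx : T ≤ x) (hE : energy f v w x ≤ 0) (hy : x ≤ y) :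
    v y = 0 ∧ w y = 0 := by
  have hcont : ContinuousOn v (Ici x) := hS.continuousOn.mono (Ici_subset_Ici.2 hx)
  have hslope : ∀ z ∈ interior (Ici x), w z = 0 := fun z hz =>
    hS.slope_eq_zero_of_energy_nonpos hf hd hx hE (by simpa using hz)
  have hderiv : ∀ z ∈ interior (Ici x), HasDerivWithinAt v (w z) (interior (Ici x)) z :=
    fun z hz => (hS.hasDerivAt z (hx.trans_lt (by simpa using hz))).hasDerivWithinAt
  have hanti := antitoneOn_of_hasDerivWithinAt_nonpos (convex_Ici x) hcont hderiv
    fun z hz => (hslope z hz).le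
  have hmono := monotoneOn_of_hasDerivWithinAt_nonneg (convex_Ici x) hcont hderiv
    fun z hz => (hslope z hz).ge
  have hev := eventually_ge_atTop y
  have hvy : v y = 0 := le_antisymm
    (ge_of_tendsto hS.tendsto_zero (hev.mono fun z hz => hmono hy (hy.trans hz) hz))
    (le_of_tendsto hS.tendsto_zero (hev.mono fun z hz => hanti hy (hy.trans hz) hz))
  have hEy := (hS.antitoneOn_energy hf hd.le hx (hx.trans hy) hy).trans hE
  rw [energy, hvy, Fint_zero, mul_zero, add_zero] at hEy
  exact ⟨hvy, by nlinarith⟩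

theorem beta_lt (hS : DecayingSolution d f T v w) (hN : Nonlinearity d β f) (hT : 0 < v T) :
    β < v T := by
  by_contra hle
  have hE : energy f v w T ≤ 0 := by
    have := hN.Fint_nonpos (s := v T) (by rw [abs_of_pos hT]; exact not_lt.1 hle)
    rw [energy, hS.slope_eq_zero]
    linarith
  exact hT.ne' (hS.eq_zero_of_energy_nonpos hN.continuous hN.d_pos le_rfl hE le_rfl).1

end DecayingSolution

/-! ### Inversion of the monotone pieces -/

theorem exists_inverse {U : Set ℝ} (hU : IsOpen U) (hv : ∀ x ∈ U, HasDerivAt v (w x) x)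
    (hw : ∀ x ∈ U, w x ≠ 0) (hanti : StrictAntiOn v U) (himg : v '' U = Ioo a M) :
    ∃ r : ℝ → ℝ, BijOn r (Ioo a M) U ∧ InvOn r v U (Ioo a M) ∧ AntitoneOn r (Ioo a M) ∧
      ∀ s ∈ Ioo a M, HasDerivAt r (w (r s))⁻¹ s := by
  have hbij : BijOn v U (Ioo a M) := himg ▸ hanti.injOn.bijOn_image
  have hinv := hbij.invOn_invFunOn
  set r := Function.invFunOn v U
  have hr : BijOn r (Ioo a M) U := hbij.symm hinv.symm
  have hr_anti : AntitoneOn r (Ioo a M) := fun s hs t ht hst => by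
    by_contra hlt
    have := hanti (hr.mapsTo hs) (hr.mapsTo ht) (not_le.1 hlt)
    rw [hinv.2 hs, hinv.2 ht] at this
    exact hst.not_gt this
  refine ⟨r, hr, hinv, hr_anti, fun s hs => ?_⟩
  have hcont : ContinuousAt r s :=
    continuousAt_of_monotoneOn_of_image_mem_nhds (f := OrderDual.toDual ∘ r) hr_anti.dual_right
      (isOpen_Ioo.mem_nhds hs) ((hr.image_eq ▸ hU).mem_nhds ⟨s, hs, rfl⟩)
  refine HasDerivAt.of_local_left_inverse hcont (hv _ (hr.mapsTo hs)) (hw _ (hr.mapsTo hs)) ?_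
  filter_upwards [isOpen_Ioo.mem_nhds hs] with t ht using hinv.2 ht

namespace RadialSolution

theorem exists_inverse (hS : RadialSolution d f T v w) {U : Set ℝ} (hU : IsOpen U)
    (hconv : Convex ℝ U) (hUT : U ⊆ Ioi T) (hw : ∀ x ∈ U, w x < 0) (himg : v '' U = Ioo a M) :
    ∃ r : ℝ → ℝ, BijOn r (Ioo a M) U ∧ InvOn r v U (Ioo a M) ∧ AntitoneOn r (Ioo a M) ∧
      ∀ s ∈ Ioo a M, HasDerivAt r (-(1 / -w (r s))) s ∧
        HasDerivAt (fun s => -w (r s)) (d / r s - f s / -w (r s)) s := by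
  obtain ⟨r, hr, hinv, hanti, hderiv⟩ := RadialODE.exists_inverse hU
    (fun x hx => hS.hasDerivAt x (hUT hx)) (fun x hx => (hw x hx).ne)
    (hS.strictAntiOn hconv (hUT.trans Ioi_subset_Ici_self) fun x hx => hw x (interior_subset hx))
    himg
  refine ⟨r, hr, hinv, hanti, fun s hs => ⟨?_, ?_⟩⟩
  · exact (hderiv s hs).congr_deriv (by rw [one_div, inv_neg, neg_neg])
  · have hrU := hr.mapsTo hs
    have hr0 := (hS.pos (hUT hrU)).ne'
    have hw0 := (hw _ hrU).ne
    refine ((hS.hasDerivAt_slope _ (hUT hrU)).comp s (hderiv s hs)).neg.congr_deriv ?_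
    rw [hinv.2 hs]
    field_simp
    ring

theorem tendsto_neg_slope_comp (hS : RadialSolution d f T v w) {l : Filter ℝ} {c : ℝ}
    (hc : c ∈ Ici T) (hr : Tendsto r l (𝓝 c)) (hmem : ∀ᶠ s in l, r s ∈ Ici T) :
    Tendsto (fun s => -w (r s)) l (𝓝 (-w c)) :=
  ((hS.continuousOn_slope c hc).tendsto.comp (tendsto_nhdsWithin_iff.2 ⟨hr, hmem⟩)).neg

end RadialSolution

namespace DecayingSolution

theorem exists_branch (hS : DecayingSolution d f T v w) (hN : Nonlinearity d β f) {U : Set ℝ}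
    (hU : IsOpen U) (hconv : Convex ℝ U) (hT : IsGLB U T) (hw : ∀ x ∈ U, w x < 0)
    (himg : v '' U = Ioo a (v T)) (haT : a < v T) :
    ∃ r : ℝ → ℝ, BijOn r (Ioo a (v T)) U ∧ InvOn r v U (Ioo a (v T)) ∧
      AntitoneOn r (Ioo a (v T)) ∧ Branch d f a (v T) T r (fun s => -w (r s)) := by
  have hUT : U ⊆ Ioi T := interior_Ici (a := T) ▸ interior_maximal (fun x hx => hT.1 hx) hU
  obtain ⟨r, hr, hinv, hanti, hderiv⟩ := hS.exists_inverse hU hconv hUT hw himg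
  have hrT : ∀ s ∈ Ioo a (v T), T < r s := fun s hs => hUT (hr.mapsTo hs)
  have hr_tendsto : Tendsto r (𝓝[<] (v T)) (𝓝 T) := by
    have h := hanti.tendsto_nhdsWithin_Ioo_left (nonempty_Ioo.2 haT) (by
      rw [hr.image_eq]
      exact hT.bddBelow)
    rwa [hr.image_eq, hT.csInf_eq (hr.image_eq ▸ (nonempty_Ioo.2 haT).image r)] at h
  refine ⟨r, hr, hinv, hanti, fun s hs => hS.pos (hrT s hs),
    fun s hs => neg_pos.2 (hw _ (hr.mapsTo hs)), fun s hs => (hderiv s hs).1,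
    fun s hs => (hderiv s hs).2, fun s hs => ?_, hr_tendsto, ?_⟩
  · by_contra hE
    refine (hw _ (hr.mapsTo hs)).ne (hS.eq_zero_of_energy_nonpos hN.continuous hN.d_pos
      (hrT s hs).le ?_ le_rfl).2
    simpa [energy, hinv.2 hs] using hE
  · simpa [hS.slope_eq_zero] using hS.tendsto_neg_slope_comp self_mem_Ici hr_tendsto (by
      filter_upwards [Ioo_mem_nhdsLT haT] with s hs using (hrT s hs).le)

end DecayingSolution

/-! ### Logarithmic divergence -/

theorem tendsto_atBot_of_deriv_le_neg_div {δ x₀ : ℝ} (hδ : 0 < δ) (hx₀ : 0 < x₀)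
    (hv : ∀ x, x₀ ≤ x → HasDerivAt v (w x) x) (hw : ∀ x, x₀ ≤ x → w x ≤ -(δ / x)) :
    Tendsto v atTop atBot := by
  have hderiv : ∀ x ∈ Ici x₀, HasDerivAt (fun y => v y + δ * Real.log y) (w x + δ * x⁻¹) x :=
    fun x hx => (hv x hx).add ((Real.hasDerivAt_log (hx₀.trans_le hx).ne').const_mul δ)
  have hanti : AntitoneOn (fun x => v x + δ * Real.log x) (Ici x₀) :=
    antitoneOn_of_hasDerivWithinAt_nonpos (convex_Ici x₀)
      (fun x hx => (hderiv x hx).continuousAt.continuousWithinAt)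
      (fun x hx => (hderiv x (interior_subset hx)).hasDerivWithinAt) fun x hx => by
        have := hw x (interior_subset hx)
        rw [div_eq_mul_inv] at this
        linarith
  refine tendsto_atBot_mono' atTop ?_ (tendsto_atBot_add_const_left atTop (v x₀ + δ * Real.log x₀)
    (tendsto_neg_atTop_atBot.comp (Real.tendsto_log_atTop.const_mul_atTop hδ)))
  filter_upwards [eventually_ge_atTop x₀] with x hx
  have : v x + δ * Real.log x ≤ v x₀ + δ * Real.log x₀ := hanti self_mem_Ici hx hx
  simp only [Function.comp_apply]
  linarith

theorem tendsto_nhdsGT_zero_atBot_of_div_le_deriv {δ x₀ : ℝ} (hδ : 0 < δ) (hx₀ : 0 < x₀)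
    (hv : ∀ x ∈ Ioc 0 x₀, HasDerivAt v (w x) x) (hw : ∀ x ∈ Ioc 0 x₀, δ / x ≤ w x) :
    Tendsto v (𝓝[>] 0) atBot := by
  have hderiv : ∀ x ∈ Ioc 0 x₀, HasDerivAt (fun y => v y - δ * Real.log y) (w x - δ * x⁻¹) x :=
    fun x hx => (hv x hx).sub ((Real.hasDerivAt_log hx.1.ne').const_mul δ)
  have hmono : MonotoneOn (fun x => v x - δ * Real.log x) (Ioc 0 x₀) :=
    monotoneOn_of_hasDerivWithinAt_nonneg (convex_Ioc 0 x₀)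
      (fun x hx => (hderiv x hx).continuousAt.continuousWithinAt)
      (fun x hx => (hderiv x (interior_subset hx)).hasDerivWithinAt) fun x hx => by
        have := hw x (interior_subset hx)
        rw [div_eq_mul_inv] at this
        linarith
  refine tendsto_atBot_mono' _ ?_ (tendsto_atBot_add_const_left _ (v x₀ - δ * Real.log x₀)
    (Real.tendsto_log_nhdsGT_zero.const_mul_atBot hδ))
  filter_upwards [Ioc_mem_nhdsGT hx₀] with x hx
  have : v x - δ * Real.log x ≤ v x₀ - δ * Real.log x₀ := hmono hx (right_mem_Ioc.2 hx₀) hx.2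
  linarith

/-! ### Sign changes -/

/-- The radii larger than `T` at which `v` changes sign. -/
def signChangesAfter (v : ℝ → ℝ) (T : ℝ) : Set ℝ := {z | T < z ∧ SignChange v z}

theorem signChange_neg_iff {z : ℝ} : SignChange (-v) z ↔ SignChange v z := by
  simp only [SignChange, Pi.neg_apply, neg_eq_zero, neg_pos, neg_neg_iff_pos,
    and_comm (a := ∃ x ∈ _, v x < 0)]

theorem signChangesAfter_neg : signChangesAfter (-v) T = signChangesAfter v T := by
  simp only [signChangesAfter, signChange_neg_iff]

theorem signChangesAfter_eq_empty (hv : ∀ x, T < x → 0 ≤ v x) : signChangesAfter v T = ∅ := by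
  refine eq_empty_of_forall_notMem fun z ⟨hz, hsign⟩ => ?_
  obtain ⟨x, hx, hlt⟩ := (hsign.2 (z - T) (sub_pos.2 hz)).2
  exact (hv x (by linarith [hx.1.1])).not_gt hlt

theorem signChange_of_strictAntiOn {c z : ℝ} (hanti : StrictAntiOn v (Icc a c)) (ha : 0 ≤ a)
    (hz : z ∈ Ioo a c) (hv : v z = 0) : SignChange v z := by
  refine ⟨hv, fun ε hε => ⟨?_, ?_⟩⟩
  · obtain ⟨x, hx, hxz⟩ := exists_between (max_lt (sub_lt_self z hε) hz.1)
    obtain ⟨hεx, hax⟩ := max_lt_iff.1 hx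
    exact ⟨x, ⟨⟨hεx, by linarith⟩, ha.trans_lt hax⟩,
      hv ▸ hanti ⟨hax.le, (hxz.trans hz.2).le⟩ (Ioo_subset_Icc_self hz) hxz⟩
  · obtain ⟨x, hzx, hx⟩ := exists_between (lt_min (lt_add_of_pos_right z hε) hz.2)
    obtain ⟨hxε, hxc⟩ := lt_min_iff.1 hx
    have hax := hz.1.trans hzx
    exact ⟨x, ⟨⟨by linarith, hxε⟩, ha.trans_lt hax⟩,
      hv ▸ hanti (Ioo_subset_Icc_self hz) ⟨hax.le, hxc.le⟩ hzx⟩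

theorem encard_signChangesAfter {T' : ℝ} (hT : 0 ≤ T) (hTT' : T ≤ T')
    (hcont : ContinuousOn v (Icc T T')) (hanti : StrictAntiOn v (Icc T T')) (hpos : 0 < v T)
    (hneg : v T' < 0) :
    (signChangesAfter v T).encard = (signChangesAfter v T').encard + 1 := by
  obtain ⟨z, hz, hvz⟩ := intermediate_value_Ioo' hTT' hcont ⟨hneg, hpos⟩
  have hz' : z ∉ signChangesAfter v T' := fun h => hz.2.not_gt h.1
  rw [← encard_insert_of_notMem hz']
  congr 1
  ext x
  constructor
  · rintro ⟨hx, hsign⟩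
    rcases le_or_gt x T' with h | h
    · exact Or.inl (hanti.injOn ⟨hx.le, h⟩ (Ioo_subset_Icc_self hz) (hsign.1.trans hvz.symm))
    · exact Or.inr ⟨h, hsign⟩
  · rintro (rfl | ⟨hx, hsign⟩)
    · exact ⟨hz.1, signChange_of_strictAntiOn hanti hT hz hvz⟩
    · exact ⟨hTT'.trans_lt hx, hsign⟩

/-! ### The first monotone piece of a decaying solution -/

/-- A branch going down to the value `0`, along which `r p` is not bounded away from zero near the
end. -/
structure DecayingBranch (d β : ℝ) (f : ℝ → ℝ) (M T : ℝ) (r p : ℝ → ℝ) : Prop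
    extends Branch d f 0 M T r p where
  exists_mul_lt : ∀ δ > 0, ∃ s ∈ Ioo 0 β, r s * p s < δ

theorem DecayingBranch.not_startLT (hB₂ : DecayingBranch d β f M₂ T₂ r₂ p₂)
    (hB₁ : Branch d f 0 M₁ T₁ r₁ p₁) (hN : Nonlinearity d β f) :
    ¬StartLT d β f T₁ M₁ T₂ M₂ := by
  intro hS
  obtain ⟨δ, hδ, hle⟩ := hB₁.exists_pos_forall_le_mul hB₂.toBranch hN hS
  obtain ⟨s, hs, hlt⟩ := hB₂.exists_mul_lt δ hδ
  exact (hle s hs).not_gt hlt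

theorem image_Ioi_of_strictAntiOn {g : ℝ → ℝ} {l : ℝ} (hg : ContinuousOn g (Ici T))
    (hanti : StrictAntiOn g (Ici T)) (hlim : Tendsto g atTop (𝓝 l)) :
    g '' Ioi T = Ioo l (g T) := by
  have hle : ∀ x ∈ Ici T, l ≤ g x := fun x hx => by
    refine le_of_tendsto hlim ?_
    filter_upwards [eventually_ge_atTop x] with y hy
      using hanti.antitoneOn hx (le_trans hx hy) hy
  apply Subset.antisymm
  · rintro _ ⟨x, hx, rfl⟩
    obtain ⟨y, hy⟩ := exists_gt x
    have hTx : x ∈ Ici T := Ioi_subset_Ici_self hx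
    have hTy : y ∈ Ici T := le_trans hTx hy.le
    exact ⟨(hle y hTy).trans_lt (hanti hTx hTy hy), hanti self_mem_Ici hTx hx⟩
  · intro s hs
    obtain ⟨y, hys, hTy⟩ := ((hlim.eventually_lt_const hs.1).and (eventually_gt_atTop T)).exists
    obtain ⟨x, hx, rfl⟩ := intermediate_value_Ioo' hTy.le (hg.mono Icc_subset_Ici_self) ⟨hys, hs.2⟩
    exact ⟨x, hx.1, rfl⟩

theorem RadialSolution.slope_neg_or_exists_critical (hS : RadialSolution d f T v w)
    (hN : Nonlinearity d β f) (hM : β < v T) :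
    (∀ x, T < x → w x < 0) ∨ ∃ T', T < T' ∧ w T' = 0 ∧ ∀ x ∈ Ioo T T', w x < 0 := by
  rw [or_iff_not_imp_left]
  intro hneg
  push Not at hneg
  obtain ⟨x₁, hTx₁, hx₁⟩ := hneg
  obtain ⟨c, hTc, hc⟩ := hS.exists_slope_neg hN hM
  have hcx₁ : c < x₁ := not_le.1 fun h => (hc x₁ ⟨hTx₁, h⟩).not_ge hx₁
  have hcont : ContinuousOn (fun t => -w (-t)) (Icc (-x₁) (-c)) :=
    (hS.continuousOn_slope.comp continuousOn_neg fun t ht => by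
      simp only [mem_Ici]
      linarith [ht.2]).neg
  obtain ⟨t, ht, hwt, hpos⟩ := exists_last_zero (neg_le_neg hcx₁.le) hcont (by simpa using hx₁)
    (by simpa using hc c (right_mem_Ioc.2 hTc))
  refine ⟨-t, by linarith [ht.2], neg_eq_zero.1 hwt, fun x hx => ?_⟩
  rcases le_or_gt x c with h | h
  · exact hc x ⟨hx.1, h⟩
  · simpa using hpos (-x) ⟨by linarith [hx.2], by linarith⟩

namespace DecayingSolution

theorem exists_decayingBranch_of_slope_neg (hS : DecayingSolution d f T v w)
    (hN : Nonlinearity d β f) (hM : β < v T) (hw : ∀ x, T < x → w x < 0) :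
    (∃ r p, DecayingBranch d β f (v T) T r p) ∧ signChangesAfter v T = ∅ := by
  have himg := image_Ioi_of_strictAntiOn hS.continuousOn
    (hS.strictAntiOn (convex_Ici T) le_rfl fun x hx => hw x (by simpa using hx)) hS.tendsto_zero
  have hpos : ∀ x, T < x → 0 < v x := fun x hx => (himg.le ⟨x, hx, rfl⟩).1
  obtain ⟨r, -, hinv, -, hB⟩ := hS.exists_branch hN isOpen_Ioi (convex_Ioi T) isGLB_Ioi hw himg
    (hN.beta_pos.trans hM)
  refine ⟨⟨r, _, hB, fun δ hδ => ?_⟩, signChangesAfter_eq_empty fun x hx => (hpos x hx).le⟩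
  by_contra! hle
  obtain ⟨x₀, hx₀⟩ := eventually_atTop.1
    ((hS.tendsto_zero.eventually_lt_const hN.beta_pos).and (eventually_gt_atTop T))
  have hTx₀ := (hx₀ x₀ le_rfl).2
  have hslope : ∀ x, x₀ ≤ x → w x ≤ -(δ / x) := fun x hx => by
    have hTx := (hx₀ x hx).2
    have hmul := hle (v x) ⟨hpos x hTx, (hx₀ x hx).1⟩
    rw [hinv.1 hTx] at hmul
    rw [le_neg, div_le_iff₀' (hS.pos hTx)]
    exact hmul
  exact not_tendsto_nhds_of_tendsto_atBot (tendsto_atBot_of_deriv_le_neg_div hδ (hS.pos hTx₀)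
    (fun x hx => hS.hasDerivAt x (hx₀ x hx).2) hslope) 0 hS.tendsto_zero

theorem exists_branch_of_critical (hS : DecayingSolution d f T v w) (hN : Nonlinearity d β f)
    {T' : ℝ} (hTT' : T < T') (hcrit : w T' = 0) (hw : ∀ x ∈ Ioo T T', w x < 0) :
    StrictAntiOn v (Icc T T') ∧ ∃ r p, Branch d f (v T') (v T) T r p ∧
      Tendsto r (𝓝[>] (v T')) (𝓝 T') ∧ Tendsto p (𝓝[>] (v T')) (𝓝 0) := by
  have hanti := hS.strictAntiOn (convex_Icc T T') Icc_subset_Ici_self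
    fun x hx => hw x (by simpa using hx)
  have hlt : v T' < v T := hanti (left_mem_Icc.2 hTT'.le) (right_mem_Icc.2 hTT'.le) hTT'
  have himg := (hS.continuousOn.mono Icc_subset_Ici_self).image_Ioo_of_strictAntiOn hTT'.le hanti
  obtain ⟨r, hr, -, hr_anti, hB⟩ := hS.exists_branch hN isOpen_Ioo (convex_Ioo T T')
    (isGLB_Ioo hTT') hw himg hlt
  have hr_tendsto : Tendsto r (𝓝[>] (v T')) (𝓝 T') := by
    have h := hr_anti.tendsto_nhdsWithin_Ioo_right (nonempty_Ioo.2 hlt)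
      (hr.image_eq ▸ bddAbove_Ioo)
    rwa [hr.image_eq, csSup_Ioo hTT'] at h
  refine ⟨hanti, r, _, hB, hr_tendsto, ?_⟩
  simpa [hcrit] using hS.tendsto_neg_slope_comp hTT'.le hr_tendsto (by
    filter_upwards [Ioo_mem_nhdsGT hlt] with s hs using (hr.mapsTo hs).1.le)

theorem exists_decayingBranch_of_energy_nonpos (hS : DecayingSolution d f T v w)
    (hN : Nonlinearity d β f) {T' : ℝ} (hTT' : T < T') (hcrit : w T' = 0)
    (hw : ∀ x ∈ Ioo T T', w x < 0) (hE : energy f v w T' ≤ 0) :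
    (∃ r p, DecayingBranch d β f (v T) T r p) ∧ signChangesAfter v T = ∅ := by
  have hzero : ∀ x, T' ≤ x → v x = 0 := fun x hx =>
    (hS.eq_zero_of_energy_nonpos hN.continuous hN.d_pos hTT'.le hE hx).1
  obtain ⟨hanti, r, p, hB, hr, hp⟩ := hS.exists_branch_of_critical hN hTT' hcrit hw
  rw [hzero T' le_rfl] at hB hr hp
  have hmul : Tendsto (fun s => r s * p s) (𝓝[>] 0) (𝓝 0) := by simpa using hr.mul hp
  refine ⟨⟨r, p, hB, fun δ hδ => ?_⟩, signChangesAfter_eq_empty fun x hx => ?_⟩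
  · exact ((Eventually.and (Ioo_mem_nhdsGT hN.beta_pos) (hmul.eventually_lt_const hδ))).exists
  · rcases le_total x T' with h | h
    · rw [← hzero T' le_rfl]
      exact hanti.antitoneOn ⟨hx.le, h⟩ (right_mem_Icc.2 hTT'.le) h
    · exact (hzero x h).ge

theorem exists_crossingBranch_of_energy_pos (hS : DecayingSolution d f T v w)
    (hN : Nonlinearity d β f) (hM : β < v T) {T' : ℝ} (hTT' : T < T') (hcrit : w T' = 0)
    (hw : ∀ x ∈ Ioo T T', w x < 0) (hE : 0 < energy f v w T') :
    (∃ r p, CrossingBranch d β f (v T') T' (v T) T r p) ∧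
      (signChangesAfter v T).encard = (signChangesAfter v T').encard + 1 := by
  obtain ⟨hanti, r, p, hB, hr, hp⟩ := hS.exists_branch_of_critical hN hTT' hcrit hw
  have hF : 0 < Fint f (v T') := by
    rw [energy, hcrit] at hE
    linarith
  have hlt : v T' < -β := by
    rcases lt_abs.1 (hN.beta_lt_abs_iff.2 hF) with h | h
    · refine absurd hcrit (hS.slope_neg hN.d_pos hTT' fun x hx => hN.pos _ ?_).ne
      exact (h.trans (hanti (Ioo_subset_Icc_self hx) (right_mem_Icc.2 hTT'.le) hx.2)).le
    · exact lt_neg_of_lt_neg h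
  have hβ := hN.beta_pos
  exact ⟨⟨r, p, hB, hlt, hr, hp⟩, encard_signChangesAfter hS.T_nonneg hTT'.le
    (hS.continuousOn.mono Icc_subset_Ici_self) hanti (by linarith) (by linarith)⟩

theorem decayingBranch_or_crossingBranch (hS : DecayingSolution d f T v w)
    (hN : Nonlinearity d β f) (hM : β < v T) :
    ((∃ r p, DecayingBranch d β f (v T) T r p) ∧ signChangesAfter v T = ∅) ∨
      ∃ T', DecayingSolution d f T' (-v) (-w) ∧
        (∃ r p, CrossingBranch d β f (v T') T' (v T) T r p) ∧
        (signChangesAfter v T).encard = (signChangesAfter (-v) T').encard + 1 := by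
  rcases hS.slope_neg_or_exists_critical hN hM with hw | ⟨T', hTT', hcrit, hw⟩
  · exact Or.inl (hS.exists_decayingBranch_of_slope_neg hN hM hw)
  rcases le_or_gt (energy f v w T') 0 with hE | hE
  · exact Or.inl (hS.exists_decayingBranch_of_energy_nonpos hN hTT' hcrit hw hE)
  · simp only [signChangesAfter_neg]
    exact Or.inr ⟨T', hS.restart_neg hN.odd hTT' hcrit,
      hS.exists_crossingBranch_of_energy_pos hN hM hTT' hcrit hw hE⟩

/-! ### Comparison of two decaying solutions -/

theorem not_startLT (hN : Nonlinearity d β f) {m : ℕ} :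
    ∀ {T₁ T₂ : ℝ} {v₁ w₁ v₂ w₂ : ℝ → ℝ}, DecayingSolution d f T₁ v₁ w₁ →
      DecayingSolution d f T₂ v₂ w₂ → (signChangesAfter v₁ T₁).encard = m →
      (signChangesAfter v₂ T₂).encard = m → ¬StartLT d β f T₁ (v₁ T₁) T₂ (v₂ T₂) := by
  induction m with
  | zero =>
    intro T₁ T₂ v₁ w₁ v₂ w₂ h₁ h₂ hm₁ hm₂ hlt
    rcases h₁.decayingBranch_or_crossingBranch hN hlt.beta_lt with
      ⟨⟨r₁, p₁, hB₁⟩, -⟩ | ⟨T₁', -, -, hcard₁⟩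
    · rcases h₂.decayingBranch_or_crossingBranch hN hlt.beta_lt_right with
        ⟨⟨r₂, p₂, hB₂⟩, -⟩ | ⟨T₂', -, -, hcard₂⟩
      · exact hB₂.not_startLT hB₁.toBranch hN hlt
      · exact absurd (hcard₂.symm.trans hm₂) (by simp)
    · exact absurd (hcard₁.symm.trans hm₁) (by simp)
  | succ m ih =>
    intro T₁ T₂ v₁ w₁ v₂ w₂ h₁ h₂ hm₁ hm₂ hlt
    rcases h₁.decayingBranch_or_crossingBranch hN hlt.beta_lt with
      ⟨-, hempty₁⟩ | ⟨T₁', hS₁, ⟨r₁, p₁, hB₁⟩, hcard₁⟩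
    · exact absurd hm₁.symm (by simp [hempty₁])
    rcases h₂.decayingBranch_or_crossingBranch hN hlt.beta_lt_right with
      ⟨-, hempty₂⟩ | ⟨T₂', hS₂, ⟨r₂, p₂, hB₂⟩, hcard₂⟩
    · exact absurd hm₂.symm (by simp [hempty₂])
    exact ih hS₁ hS₂ (by simpa [hm₁] using hcard₁.symm) (by simpa [hm₂] using hcard₂.symm)
      (hB₁.startLT_neg hB₂ hN hlt)

end DecayingSolution

/-! ### Regularity at the origin -/

theorem antitoneOn_rpow_mul_sub {φ : ℝ → ℝ} {B c : ℝ} (hd : 0 ≤ d) (hB : 0 ≤ B)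
    (hw : ∀ x ∈ Ioc 0 c, HasDerivAt w (-(d / x * w x) - φ x) x) (hφ : ∀ x ∈ Ioc 0 c, -B ≤ φ x) :
    AntitoneOn (fun x => x ^ d * w x - B * x ^ (d + 1)) (Ioc 0 c) := by
  have hderiv : ∀ x ∈ Ioc 0 c, HasDerivAt (fun x => x ^ d * w x - B * x ^ (d + 1))
      (-(x ^ d * (φ x + B * (d + 1)))) x := fun x hx => by
    refine ((hasDerivAt_rpow_mul hx.1 (hw x hx)).sub
      ((Real.hasDerivAt_rpow_const (p := d + 1) (Or.inl hx.1.ne')).const_mul B)).congr_deriv ?_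
    rw [add_sub_cancel_right]
    ring
  refine antitoneOn_of_hasDerivWithinAt_nonpos (convex_Ioc 0 c)
    (fun x hx => (hderiv x hx).continuousAt.continuousWithinAt)
    (fun x hx => (hderiv x (interior_subset hx)).hasDerivWithinAt) fun x hx => ?_
  have hmem := interior_subset hx
  have hsum : 0 ≤ φ x + B * (d + 1) := by
    have := hφ x hmem
    nlinarith
  exact neg_nonpos.2 (mul_nonneg (Real.rpow_nonneg hmem.1.le d) hsum)

theorem slope_le_mul_of_tendsto {φ : ℝ → ℝ} {B c l : ℝ} (hd : 1 ≤ d) (hB : 0 ≤ B)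
    (hlim : Tendsto v (𝓝[>] 0) (𝓝 l)) (hv : ∀ x ∈ Ioc 0 c, HasDerivAt v (w x) x)
    (hw : ∀ x ∈ Ioc 0 c, HasDerivAt w (-(d / x * w x) - φ x) x) (hφ : ∀ x ∈ Ioc 0 c, -B ≤ φ x)
    {x₀ : ℝ} (hx₀ : x₀ ∈ Ioc 0 c) : w x₀ ≤ B * x₀ := by
  by_contra! hlt
  set η := x₀ ^ d * w x₀ - B * x₀ ^ (d + 1) with hη
  have hη_pos : 0 < η := by
    have := mul_lt_mul_of_pos_left hlt (Real.rpow_pos_of_pos hx₀.1 d)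
    rw [hη, Real.rpow_add_one hx₀.1.ne']
    linarith
  have hflux : ∀ x ∈ Ioc 0 x₀, η ≤ x ^ d * w x := fun x hx => by
    have hanti : η ≤ x ^ d * w x - B * x ^ (d + 1) :=
      antitoneOn_rpow_mul_sub (zero_le_one.trans hd) hB hw hφ ⟨hx.1, hx.2.trans hx₀.2⟩ hx₀ hx.2
    linarith [mul_nonneg hB (Real.rpow_nonneg hx.1.le (d + 1))]
  have hscale : 0 < x₀ ^ (d - 1) := Real.rpow_pos_of_pos hx₀.1 _
  have hslope : ∀ x ∈ Ioc 0 x₀, η / x₀ ^ (d - 1) / x ≤ w x := fun x hx => by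
    have hw_pos : 0 < w x :=
      pos_of_mul_pos_right (hη_pos.trans_le (hflux x hx)) (Real.rpow_nonneg hx.1.le d)
    rw [div_div, div_le_iff₀ (mul_pos hscale hx.1)]
    calc η ≤ x ^ d * w x := hflux x hx
      _ = x ^ (d - 1) * x * w x := by rw [← Real.rpow_add_one hx.1.ne', sub_add_cancel]
      _ ≤ x₀ ^ (d - 1) * x * w x := by
        have := hx.1.le
        gcongr
        exact hx.2
      _ = w x * (x₀ ^ (d - 1) * x) := mul_comm _ _
  exact not_tendsto_nhds_of_tendsto_atBot (tendsto_nhdsGT_zero_atBot_of_div_le_deriv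
    (div_pos hη_pos hscale) hx₀.1 (fun x hx => hv x ⟨hx.1, hx.2.trans hx₀.2⟩) hslope) l hlim

theorem tendsto_slope_nhdsGT_zero (hd : 1 ≤ d) (hf : Continuous f) (hcont : ContinuousOn v (Ici 0))
    (hv : ∀ x, 0 < x → HasDerivAt v (w x) x)
    (hw : ∀ x, 0 < x → HasDerivAt w (-(d / x * w x) - f (v x)) x) :
    Tendsto w (𝓝[>] 0) (𝓝 0) := by
  obtain ⟨B, hB⟩ := (isCompact_Icc (a := (0 : ℝ)) (b := 1)).exists_bound_of_continuousOn
    (hf.comp_continuousOn (hcont.mono Icc_subset_Ici_self))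
  have hB_nonneg : 0 ≤ B := (norm_nonneg _).trans (hB 0 (left_mem_Icc.2 zero_le_one))
  have hbound : ∀ x ∈ Ioc (0 : ℝ) 1, |f (v x)| ≤ B := fun x hx => hB x (Ioc_subset_Icc_self hx)
  have hlim : Tendsto v (𝓝[>] 0) (𝓝 (v 0)) :=
    (hcont 0 self_mem_Ici).mono Ioi_subset_Ici_self
  have hupper : ∀ x ∈ Ioc (0 : ℝ) 1, w x ≤ B * x := fun x hx =>
    slope_le_mul_of_tendsto (φ := fun x => f (v x)) hd hB_nonneg hlim (fun x hx => hv x hx.1)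
      (fun x hx => hw x hx.1) (fun x hx => (abs_le.1 (hbound x hx)).1) hx
  have hlower : ∀ x ∈ Ioc (0 : ℝ) 1, -w x ≤ B * x := fun x hx =>
    slope_le_mul_of_tendsto (v := -v) (w := -w) (φ := fun x => -f (v x)) hd hB_nonneg hlim.neg
      (fun x hx => (hv x hx.1).neg)
      (fun x hx => (hw x hx.1).neg.congr_deriv (by simp only [Pi.neg_apply]; ring))
      (fun x hx => neg_le_neg (abs_le.1 (hbound x hx)).2) hx
  refine squeeze_zero_norm' (a := fun x => B * x) ?_ ?_
  · filter_upwards [Ioc_mem_nhdsGT zero_lt_one] with x hx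
      using abs_le.2 ⟨neg_le.1 (hlower x hx), hupper x hx⟩
  · have := (continuous_const_mul B).tendsto 0
    rw [mul_zero] at this
    exact this.mono_left nhdsWithin_le_nhds

theorem decayingSolution_of_boundState {n : ℕ} (hn : 2 ≤ n) (hf : Continuous f)
    (hv : BoundState n f v) : DecayingSolution ((n : ℝ) - 1) f 0 v (deriv v) := by
  obtain ⟨hcont, hdiff, heq, hzero, hlim⟩ := hv
  have hn' : (2 : ℝ) ≤ n := by exact_mod_cast hn
  have hderiv : ∀ x, 0 < x → HasDerivAt v (deriv v x) x := fun x hx => (hdiff x hx).1.hasDerivAt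
  have hslope : ∀ x, 0 < x → HasDerivAt (deriv v)
      (-(((n : ℝ) - 1) / x * deriv v x) - f (v x)) x := fun x hx =>
    (hdiff x hx).2.hasDerivAt.congr_deriv (by linarith [heq x hx])
  refine ⟨⟨le_rfl, hcont, fun x hx => ?_, hzero, hderiv, hslope⟩, hlim⟩
  rcases (mem_Ici.1 hx).eq_or_lt with rfl | hx
  · rw [← continuousWithinAt_Ioi_iff_Ici, ContinuousWithinAt, hzero]
    exact tendsto_slope_nhdsGT_zero (by linarith) hf hcont hderiv hslope
  · exact (hslope x hx).continuousAt.continuousWithinAt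

/-! ### The hypotheses (f1), (f2) and (f4') -/

theorem Fint_nonpos_of_hf1 {b s : ℝ} (hf : Continuous f) (h1 : Hf1 f b β) (hs : s ∈ Icc 0 β) :
    Fint f s ≤ 0 := by
  obtain ⟨-, -, -, -, hpos, hneg, -, hβ⟩ := h1
  rcases le_total s b with h | h
  · have hanti : AntitoneOn (Fint f) (Icc 0 b) :=
      antitoneOn_of_hasDerivWithinAt_nonpos (convex_Icc 0 b) (continuous_Fint hf).continuousOn
        (fun x _ => (hasDerivAt_Fint hf x).hasDerivWithinAt)
        fun x hx => hneg x (interior_subset hx)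
    exact Fint_zero (f := f) ▸ hanti (left_mem_Icc.2 (hs.1.trans h)) ⟨hs.1, h⟩ hs.1
  · have hmono : MonotoneOn (Fint f) (Ici b) :=
      monotoneOn_of_hasDerivWithinAt_nonneg (convex_Ici b) (continuous_Fint hf).continuousOn
        (fun x _ => (hasDerivAt_Fint hf x).hasDerivWithinAt)
        fun x hx => (hpos x (by simpa using hx)).le
    exact hβ ▸ hmono h (h.trans hs.2) hs.2

theorem contDiffOn_of_hf2 (h2 : Hf2 f) : ContDiffOn ℝ 1 f (Ioi 0) :=
  (contDiffOn_one_iff_derivWithin (uniqueDiffOn_Ioi 0)).2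
    ⟨fun x hx => (h2.2.1 x hx).differentiableWithinAt,
      h2.2.2.1.congr fun _ hx => derivWithin_of_isOpen isOpen_Ioi hx⟩

theorem nonlinearity_of_hf1_hf2_hf4' {n : ℕ} {b : ℝ} (hn : 2 ≤ n) (hf : Continuous f)
    (h1 : Hf1 f b β) (h2 : Hf2 f) (h4 : Hf4' n f β) : Nonlinearity ((n : ℝ) - 1) β f where
  one_le_d := by
    have : (2 : ℝ) ≤ n := by exact_mod_cast hn
    linarith
  beta_pos := h1.2.2.1.trans h1.2.2.2.1
  continuous := hf
  odd := h1.1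
  Fint_nonpos_of_mem _ hs := Fint_nonpos_of_hf1 hf h1 hs
  Fint_beta := h1.2.2.2.2.2.2.2
  pos s hs := h1.2.2.2.2.1 s (h1.2.2.2.1.trans_le hs)
  contDiffOn := (contDiffOn_of_hf2 h2).mono (Ioi_subset_Ioi (h1.2.2.1.trans h1.2.2.2.1).le)
  le_deriv_quotient s hs := by
    convert h4 s hs using 2
    ring

/-! ### Uniqueness of the initial value -/

theorem Nonlinearity.startLT_zero (hN : Nonlinearity d β f) (hM₁ : β < M₁) (hM : M₁ < M₂) :
    StartLT d β f 0 M₁ 0 M₂ := by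
  have hlt : 1 < d → quotientPrimitive d β f M₁ < quotientPrimitive d β f M₂ := fun hd =>
    hN.strictMonoOn_quotientPrimitive hd hM₁.le (hM₁.trans hM).le hM
  rcases hN.one_le_d.eq_or_lt with rfl | hd
  · exact ⟨hM₁, hM, by simp [criticalPohozaev, quotientPrimitive_one], Or.inl rfl⟩
  · exact ⟨hM₁, hM, by simpa [criticalPohozaev] using (hlt hd).le,
      Or.inr (by simpa [criticalPohozaev] using hlt hd)⟩

theorem encard_signChangesAfter_zero {m : ℕ} (hv : ExactSignChanges v m) :
    (signChangesAfter v 0).encard = m :=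
  hv.1.cast_ncard_eq.symm.trans (congrArg Nat.cast hv.2)

theorem DecayingSolution.initial_le {m : ℕ} (h₁ : DecayingSolution d f 0 v₁ w₁)
    (h₂ : DecayingSolution d f 0 v₂ w₂) (hN : Nonlinearity d β f) (hpos : 0 < v₁ 0)
    (hm₁ : ExactSignChanges v₁ m) (hm₂ : ExactSignChanges v₂ m) : v₂ 0 ≤ v₁ 0 :=
  not_lt.1 fun hlt => not_startLT hN h₁ h₂ (encard_signChangesAfter_zero hm₁)
    (encard_signChangesAfter_zero hm₂) (hN.startLT_zero (h₁.beta_lt hN hpos) hlt)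

/-! ### Uniqueness for the initial value problem -/

namespace RadialSolution

theorem exists_local_inverse (hS : RadialSolution d f T v w) {x : ℝ} (hx : T < x)
    (hw : w x < 0) :
    ∃ r : ℝ → ℝ, (∀ᶠ y in 𝓝 x, r (v y) = y) ∧ ∀ᶠ s in 𝓝 (v x), v (r s) = s ∧
      HasDerivAt r (-(1 / -w (r s))) s ∧
      HasDerivAt (fun s => -w (r s)) (d / r s - f s / -w (r s)) s := by
  have hev : ∀ᶠ y in 𝓝 x, T < y ∧ w y < 0 :=
    (lt_mem_nhds hx).and ((hS.hasDerivAt_slope x hx).continuousAt.eventually_lt_const hw)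
  obtain ⟨ε, hε, hsub⟩ := (nhds_basis_Icc_pos x).mem_iff.1 hev
  have hT : Icc (x - ε) (x + ε) ⊆ Ici T := fun y hy => (hsub hy).1.le
  have himg := (hS.continuousOn.mono hT).image_Ioo_of_strictAntiOn (by linarith)
    (hS.strictAntiOn (convex_Icc _ _) hT fun y hy => (hsub (interior_subset hy)).2)
  obtain ⟨r, -, hinv, -, hderiv⟩ := hS.exists_inverse isOpen_Ioo (convex_Ioo _ _)
    (fun y hy => (hsub (Ioo_subset_Icc_self hy)).1)
    (fun y hy => (hsub (Ioo_subset_Icc_self hy)).2) himg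
  have hmem : x ∈ Ioo (x - ε) (x + ε) := ⟨by linarith, by linarith⟩
  refine ⟨r, ?_, ?_⟩
  · filter_upwards [isOpen_Ioo.mem_nhds hmem] with y hy using hinv.1 hy
  · filter_upwards [isOpen_Ioo.mem_nhds (himg ▸ mem_image_of_mem v hmem)] with s hs
      using ⟨hinv.2 hs, hderiv s hs⟩

theorem eventually_eq_of_slope_neg (h₁ : RadialSolution d f T v₁ w₁)
    (h₂ : RadialSolution d f T v₂ w₂) (hf : Continuous f) {x : ℝ} (hx : T < x)
    (hv : v₁ x = v₂ x) (hw : w₁ x = w₂ x) (hneg : w₁ x < 0) :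
    ∀ᶠ y in 𝓝 x, v₁ y = v₂ y ∧ w₁ y = w₂ y := by
  obtain ⟨r₁, hinv₁, hs₁⟩ := h₁.exists_local_inverse hx hneg
  obtain ⟨r₂, hinv₂, hs₂⟩ := h₂.exists_local_inverse hx (hw ▸ hneg)
  have hr₁ : r₁ (v₁ x) = x := hinv₁.self_of_nhds
  have hr₂ : r₂ (v₁ x) = x := hv ▸ hinv₂.self_of_nhds
  rw [← hv] at hs₂
  have heq := eventuallyEq_of_branch_equations (p₁ := fun s => -w₁ (r₁ s))
    (p₂ := fun s => -w₂ (r₂ s)) hf (hs₁.mono fun s h => h.2) (hs₂.mono fun s h => h.2)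
    (hr₁.symm ▸ h₁.pos hx) (by simpa only [hr₁] using neg_pos.2 hneg) (hr₁.trans hr₂.symm)
    (by simp only [hr₁, hr₂, hw])
  have hcont : Tendsto v₁ (𝓝 x) (𝓝 (v₁ x)) := (h₁.hasDerivAt x hx).continuousAt
  filter_upwards [hcont.eventually heq, hcont.eventually hs₂, hinv₁] with y hy hy₂ hy₁
  have hr₂y : r₂ (v₁ y) = y := hy.1.symm.trans hy₁
  simp only [hy₁, hr₂y] at hy
  exact ⟨(hr₂y ▸ hy₂.1).symm, neg_inj.1 hy.2⟩

theorem eventually_eq_of_slope_ne_zero (h₁ : RadialSolution d f T v₁ w₁)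
    (h₂ : RadialSolution d f T v₂ w₂) (hf : Continuous f) (hodd : ∀ s, f (-s) = -f s) {x : ℝ}
    (hx : T < x) (hv : v₁ x = v₂ x) (hw : w₁ x = w₂ x) (hne : w₁ x ≠ 0) :
    ∀ᶠ y in 𝓝 x, v₁ y = v₂ y ∧ w₁ y = w₂ y := by
  rcases hne.lt_or_gt with hneg | hpos
  · exact h₁.eventually_eq_of_slope_neg h₂ hf hx hv hw hneg
  · simpa only [Pi.neg_apply, neg_inj] using (h₁.neg hodd).eventually_eq_of_slope_neg (h₂.neg hodd)
      hf hx (neg_inj.2 hv) (neg_inj.2 hw) (neg_neg_of_pos hpos)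

end RadialSolution

theorem nonpos_of_deriv_le_mul {g g' : ℝ → ℝ} {C x y : ℝ} (hxy : x ≤ y)
    (hg : ContinuousOn g (Icc x y)) (hderiv : ∀ z ∈ Ioo x y, HasDerivAt g (g' z) z)
    (hle : ∀ z ∈ Ioo x y, g' z ≤ C * g z) (hx : g x ≤ 0) : g y ≤ 0 := by
  have hanti : AntitoneOn (fun z => g z * Real.exp (-(C * z))) (Icc x y) := by
    refine antitoneOn_of_hasDerivWithinAt_nonpos (convex_Icc x y)
      (f' := fun z => (g' z - C * g z) * Real.exp (-(C * z))) (hg.mul (by fun_prop)) ?_ ?_ <;>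
      rw [interior_Icc] <;> intro z hz
    · refine ((hderiv z hz).mul
        ((hasDerivAt_id z).const_mul C).neg.exp).hasDerivWithinAt.congr_deriv ?_
      simp only [Pi.neg_apply, id]
      ring
    · exact mul_nonpos_of_nonpos_of_nonneg (sub_nonpos.2 (hle z hz)) (Real.exp_nonneg _)
  refine nonpos_of_mul_nonpos_left ((hanti (left_mem_Icc.2 hxy) (right_mem_Icc.2 hxy) hxy).trans ?_)
    (Real.exp_pos (-(C * y)))
  exact mul_nonpos_of_nonpos_of_nonneg hx (Real.exp_nonneg _)

theorem two_mul_add_two_mul_le {A B D L c : ℝ} (hc : 0 ≤ c) (hL : 0 ≤ L) (hD : |D| ≤ L * |A|) :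
    2 * A * B + 2 * B * (-(c * B) - D) ≤ (1 + L) * (A ^ 2 + B ^ 2) := by
  have hBD : -(B * D) ≤ L * (|A| * |B|) :=
    calc -(B * D) ≤ |B| * |D| := abs_mul B D ▸ neg_le_abs _
      _ ≤ |B| * (L * |A|) := by gcongr
      _ = L * (|A| * |B|) := by ring
  have hAB : 2 * |A| * |B| ≤ A ^ 2 + B ^ 2 := by simpa using two_mul_le_add_sq |A| |B|
  linarith [two_mul_le_add_sq A B, mul_nonneg hc (sq_nonneg B), mul_le_mul_of_nonneg_left hAB hL]

theorem RadialSolution.eventually_eq_of_lipschitzOnWith (h₁ : RadialSolution d f T v₁ w₁)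
    (h₂ : RadialSolution d f T v₂ w₂) (hd : 0 ≤ d) {x : ℝ} {L : NNReal} {s : Set ℝ} (hx : T ≤ x)
    (hv : v₁ x = v₂ x) (hw : w₁ x = w₂ x) (hs : s ∈ 𝓝 (v₁ x)) (hL : LipschitzOnWith L f s) :
    ∀ᶠ y in 𝓝[>] x, v₁ y = v₂ y ∧ w₁ y = w₂ y := by
  have hIci : Ici x ⊆ Ici T := Ici_subset_Ici.2 hx
  have hlim : ∀ {v : ℝ → ℝ}, ContinuousOn v (Ici T) → Tendsto v (𝓝[>] x) (𝓝 (v x)) := fun h =>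
    (h x hx).mono (Ioi_subset_Ici_self.trans hIci)
  have hmem : ∀ᶠ y in 𝓝[>] x, v₁ y ∈ s ∧ v₂ y ∈ s :=
    ((hlim h₁.continuousOn).eventually_mem hs).and
      ((hlim h₂.continuousOn).eventually_mem (hv ▸ hs))
  obtain ⟨c, hc, hsub⟩ := mem_nhdsGT_iff_exists_Ioo_subset.1 hmem
  filter_upwards [Ioo_mem_nhdsGT hc] with y hy
  have hIcc : Icc x y ⊆ Ici T := Icc_subset_Ici_self.trans hIci
  have hdist : (v₁ y - v₂ y) ^ 2 + (w₁ y - w₂ y) ^ 2 ≤ 0 := by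
    refine nonpos_of_deriv_le_mul (g := fun z => (v₁ z - v₂ z) ^ 2 + (w₁ z - w₂ z) ^ 2)
      (g' := fun z => 2 * (v₁ z - v₂ z) * (w₁ z - w₂ z) + 2 * (w₁ z - w₂ z) *
        (-(d / z * (w₁ z - w₂ z)) - (f (v₁ z) - f (v₂ z)))) (C := 1 + L) hy.1.le
      ((((h₁.continuousOn.sub h₂.continuousOn).pow 2).add
        ((h₁.continuousOn_slope.sub h₂.continuousOn_slope).pow 2)).mono hIcc)
      (fun z hz => ?_) (fun z hz => ?_) (by simp [hv, hw])
    · have hTz := hx.trans_lt hz.1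
      refine ((((h₁.hasDerivAt z hTz).sub (h₂.hasDerivAt z hTz)).pow 2).add
        (((h₁.hasDerivAt_slope z hTz).sub (h₂.hasDerivAt_slope z hTz)).pow 2)).congr_deriv ?_
      simp only [Pi.sub_apply]
      ring
    · obtain ⟨hz₁, hz₂⟩ := hsub ⟨hz.1, hz.2.trans hy.2⟩
      exact two_mul_add_two_mul_le (div_nonneg hd (h₁.pos (hx.trans_lt hz.1)).le) L.coe_nonneg
        (by simpa [Real.dist_eq] using hL.dist_le_mul _ hz₁ _ hz₂)
  constructor <;> nlinarith [sq_nonneg (v₁ y - v₂ y), sq_nonneg (w₁ y - w₂ y)]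

namespace DecayingSolution

theorem eventually_eq_nhdsGT (h₁ : DecayingSolution d f T v₁ w₁)
    (h₂ : DecayingSolution d f T v₂ w₂) (hN : Nonlinearity d β f) {x : ℝ} (hx : T ≤ x)
    (hv : v₁ x = v₂ x) (hw : w₁ x = w₂ x) : ∀ᶠ y in 𝓝[>] x, v₁ y = v₂ y ∧ w₁ y = w₂ y := by
  by_cases hw0 : w₁ x = 0
  · rcases le_or_gt (energy f v₁ w₁ x) 0 with hE | hE
    · have hE₂ : energy f v₂ w₂ x ≤ 0 := by rwa [energy, ← hv, ← hw]
      filter_upwards [self_mem_nhdsWithin] with y hy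
      obtain ⟨hv₁, hw₁⟩ := h₁.eq_zero_of_energy_nonpos hN.continuous hN.d_pos hx hE (le_of_lt hy)
      obtain ⟨hv₂, hw₂⟩ := h₂.eq_zero_of_energy_nonpos hN.continuous hN.d_pos hx hE₂ (le_of_lt hy)
      exact ⟨hv₁.trans hv₂.symm, hw₁.trans hw₂.symm⟩
    · have hβ : β < |v₁ x| := hN.beta_lt_abs_iff.2 (by simpa [energy, hw0] using hE)
      obtain ⟨L, s, hs, hL⟩ := (hN.contDiffAt hβ).exists_lipschitzOnWith
      exact h₁.eventually_eq_of_lipschitzOnWith h₂.toRadialSolution hN.d_pos.le hx hv hw hs hL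
  · have hTx : T < x := hx.lt_of_ne fun h => hw0 (h ▸ h₁.slope_eq_zero)
    exact nhdsWithin_le_nhds (h₁.eventually_eq_of_slope_ne_zero h₂.toRadialSolution hN.continuous
      hN.odd hTx hv hw hw0)

theorem eqOn_of_eq (h₁ : DecayingSolution d f T v₁ w₁) (h₂ : DecayingSolution d f T v₂ w₂)
    (hN : Nonlinearity d β f) (hv : v₁ T = v₂ T) : EqOn v₁ v₂ (Ici T) := by
  intro y hy
  have hclosed : IsClosed ({x | v₁ x = v₂ x ∧ w₁ x = w₂ x} ∩ Icc T y) := by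
    have hpreimage : {x | v₁ x = v₂ x ∧ w₁ x = w₂ x} ∩ Icc T y =
        Icc T y ∩ (fun x => (v₁ x - v₂ x, w₁ x - w₂ x)) ⁻¹' {0} := by
      ext x
      simp [sub_eq_zero, and_comm, Prod.ext_iff]
    rw [hpreimage]
    exact (((h₁.continuousOn.sub h₂.continuousOn).prodMk
      (h₁.continuousOn_slope.sub h₂.continuousOn_slope)).mono
        Icc_subset_Ici_self).preimage_isClosed_of_isClosed isClosed_Icc isClosed_singleton
  exact (hclosed.Icc_subset_of_forall_mem_nhdsWithin
    ⟨hv, h₁.slope_eq_zero.trans h₂.slope_eq_zero.symm⟩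
    (fun x hx => h₁.eventually_eq_nhdsGT h₂ hN hx.2.1 hx.1.1 hx.1.2) (right_mem_Icc.2 hy)).1

end DecayingSolution

end RadialODE

theorem uniqueness_kth_bound_state_general {d β : ℝ} {f u₁ w₁ u₂ w₂ : ℝ → ℝ} {m : ℕ}
    (hN : RadialODE.Nonlinearity d β f) (h₁ : RadialODE.DecayingSolution d f 0 u₁ w₁)
    (h₂ : RadialODE.DecayingSolution d f 0 u₂ w₂) (hp₁ : 0 < u₁ 0) (hp₂ : 0 < u₂ 0)
    (hc₁ : ExactSignChanges u₁ m) (hc₂ : ExactSignChanges u₂ m) :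
    u₁ 0 = u₂ 0 ∧ EqOn u₁ u₂ (Ici 0) := by
  have h0 : u₁ 0 = u₂ 0 :=
    le_antisymm (h₂.initial_le h₁ hN hp₂ hc₂ hc₁) (h₁.initial_le h₂ hN hp₁ hc₁ hc₂)
  exact ⟨h0, h₁.eqOn_of_eq h₂ hN h0⟩

/-- **Theorem 1.1.** For `2 ≤ n ≤ 4`, under (f1), (f2), (f4'), problem (P) has at most one
solution with `u 0 > 0` having exactly `k-1` sign changes in `(0,∞)`. -/
theorem uniqueness_kth_bound_state
    (n : ℕ) (hn2 : 2 ≤ n) (hn4 : n ≤ 4) (k : ℕ) (hk : 1 ≤ k)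
    (f : ℝ → ℝ) (b β : ℝ) (hf : Continuous f)
    (h1 : Hf1 f b β) (h2 : Hf2 f) (h4 : Hf4' n f β)
    (u₁ u₂ : ℝ → ℝ) (hs₁ : BoundState n f u₁) (hs₂ : BoundState n f u₂)
    (hp₁ : 0 < u₁ 0) (hp₂ : 0 < u₂ 0)
    (hc₁ : ExactSignChanges u₁ (k - 1)) (hc₂ : ExactSignChanges u₂ (k - 1)) :
    u₁ 0 = u₂ 0 ∧ EqOn u₁ u₂ (Ici 0) :=
  uniqueness_kth_bound_state_general (RadialODE.nonlinearity_of_hf1_hf2_hf4' hn2 hf h1 h2 h4)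
    (RadialODE.decayingSolution_of_boundState hn2 hf hs₁)
    (RadialODE.decayingSolution_of_boundState hn2 hf hs₂) hp₁ hp₂ hc₁ hc₂
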